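/- arXiv:1407.5083 — 5 statements merged into one kernel-verified Lean document; each statement's English description precedes it below -/
import Mathlib

section
/- There is an n₀ such that every fair complete bipartite graph on more than n₀ vertices whose edges are coloured red and blue can be partitioned into 12 vertex-disjoint monochromatic cycles; that is, its vertex set is the disjoint union of the vertex sets of at most 12 monochromatic cycles. (A complete bipartite graph is fair exactly when it is balanced, i.e. its two classes have equal size.) -/
open SimpleGraph Set

/- Convention: colour `true` is red, colour `false` is blue. -/

/-- The subgraph of `G` consisting of the edges of colour `b`. -/
def monoSubgraph {V : Type*} (G : SimpleGraph V) (c : Sym2 V → Bool) (b : Bool) :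
    SimpleGraph V :=
  SimpleGraph.fromEdgeSet {e | e ∈ G.edgeSet ∧ c e = b}

/-- `S` is the vertex set of a (possibly empty, possibly trivial) path of `G`
all of whose edges have colour `b`. -/
def IsMonoPathSet {V : Type*} (G : SimpleGraph V) (c : Sym2 V → Bool) (b : Bool)
    (S : Set V) : Prop :=
  S = ∅ ∨ ∃ (u v : V) (p : G.Walk u v), p.IsPath ∧ (∀ e ∈ p.edges, c e = b) ∧
    S = {x | x ∈ p.support}

/-- `S` is the vertex set of a (possibly degenerate: empty, single vertex or single edge)
cycle of `G` all of whose edges have colour `b`. -/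
def IsMonoCycleSet {V : Type*} (G : SimpleGraph V) (c : Sym2 V → Bool) (b : Bool)
    (S : Set V) : Prop :=
  S = ∅ ∨ (∃ v, S = {v}) ∨ (∃ u v, G.Adj u v ∧ c s(u, v) = b ∧ S = {u, v}) ∨
    ∃ (v : V) (p : G.Walk v v), p.IsCycle ∧ (∀ e ∈ p.edges, c e = b) ∧
      S = {x | x ∈ p.support}

/-- `M` is a matching of `G` in colour `b` which is connected, i.e. all its edges lie in one
connected component of the subgraph formed by the edges of colour `b`. -/
def IsConnMatching {V : Type*} (G : SimpleGraph V) (c : Sym2 V → Bool) (b : Bool)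
    (M : Set (Sym2 V)) : Prop :=
  (∀ e ∈ M, e ∈ G.edgeSet ∧ c e = b) ∧
  (∀ e ∈ M, ∀ f ∈ M, e ≠ f → ∀ x, x ∈ e → x ∉ f) ∧
  (∀ e ∈ M, ∀ f ∈ M, ∀ x, x ∈ e → ∀ y, y ∈ f → (monoSubgraph G c b).Reachable x y)

/-- The set of vertices covered by a set of edges. -/
def matchSupport {V : Type*} (M : Set (Sym2 V)) : Set V := {x | ∃ e ∈ M, x ∈ e}

/-- The colouring `c` of the (bipartite, with classes `U` and `W`) graph `G` is a split
colouring: `U = A ∪ B`, `W = C ∪ D`, the edges between `A,C` and between `B,D` are blue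
(`false`), and the edges between `A,D` and between `B,C` are red (`true`). -/
def IsSplitColouring {V : Type*} (G : SimpleGraph V) (c : Sym2 V → Bool)
    (U W : Set V) : Prop :=
  ∃ A B C D : Set V,
    A ∪ B = U ∧ Disjoint A B ∧ C ∪ D = W ∧ Disjoint C D ∧
    (∀ u v, G.Adj u v →
      (((u ∈ A ∧ v ∈ C) ∨ (u ∈ C ∧ v ∈ A) ∨ (u ∈ B ∧ v ∈ D) ∨ (u ∈ D ∧ v ∈ B)) →
        c s(u, v) = false)) ∧
    (∀ u v, G.Adj u v →
      (((u ∈ A ∧ v ∈ D) ∨ (u ∈ D ∧ v ∈ A) ∨ (u ∈ B ∧ v ∈ C) ∨ (u ∈ C ∧ v ∈ B)) →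
        c s(u, v) = true))

/-- The colouring `c` of `G` is `δ`-close to a split colouring: one can delete at most
`δ|E(G)|` edges so that the remaining graph is bipartite and the colouring on it is a
split colouring. -/
def CloseToSplit {V : Type*} (G : SimpleGraph V) (c : Sym2 V → Bool) (δ : ℝ) : Prop :=
  ∃ F : Set (Sym2 V), F ⊆ G.edgeSet ∧ (F.ncard : ℝ) ≤ δ * (G.edgeSet.ncard : ℝ) ∧
    ∃ U W : Set V, U ∪ W = Set.univ ∧ Disjoint U W ∧
      (∀ u v, (G.deleteEdges F).Adj u v → ((u ∈ U ∧ v ∈ W) ∨ (u ∈ W ∧ v ∈ U))) ∧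
      IsSplitColouring (G.deleteEdges F) c U W

/-!
By the pigeonhole principle one colour, say blue, contains a complete bipartite graph between
triples `X` and `Y` of vertices of the two classes. Depth-first search in a balanced set `S`,
stopped when there are as many unvisited as abandoned vertices, gives a path in a prescribed colour
with both ends in a prescribed class, such that the rest of `S` is covered by two cycles of the
other colour and a single vertex. This path has to be closed to a cycle.

Call a vertex exceptional if it has at most one blue neighbour in the triple opposite to it. A blue
path whose ends lie in the same class and are not exceptional closes through the opposite triple
and a vertex of the other one, which is joined to all of that triple in blue. An exceptional vertex
has at least two red neighbours in the opposite triple, so that a red path whose ends are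
exceptional and lie in the same class closes through a common red neighbour of its ends.

Suppose that the class of `X` does not have more exceptional vertices than the class of `Y`. Let `S`
consist of its exceptional vertices and equally many exceptional vertices of the other class. A red
path with ends in the class of `Y` is used for `S`, and a blue path with ends in the class of `X`
for the set of vertices outside `S ∪ X ∪ Y`. Each of the two sets requires four cycles, which
together contain two vertices of `X`, so that at most four vertices of `X ∪ Y` are left as trivial
cycles.
-/

open scoped Finset

section Paths

variable {V : Type*} {H : SimpleGraph V} {l : List V}

/-- `l` lists, in order, the vertices of a path of `H`. The empty list is allowed, since the paths
produced by depth-first search may be empty. -/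
structure IsPathList (H : SimpleGraph V) (l : List V) : Prop where
  nodup : l.Nodup
  isChain : l.IsChain H.Adj

/-- The first and the last entry of `l` lie in `A`; this holds vacuously for the empty list. -/
def EndsIn (A : Set V) (l : List V) : Prop :=
  (∀ a ∈ l.head?, a ∈ A) ∧ ∀ z ∈ l.getLast?, z ∈ A

lemma EndsIn.imp {A B : Set V} (h : EndsIn A l) (hAB : ∀ v ∈ l, v ∈ A → v ∈ B) : EndsIn B l :=
  ⟨fun a ha => hAB a (List.mem_of_mem_head? ha) (h.1 a ha),
    fun z hz => hAB z (List.mem_of_mem_getLast? hz) (h.2 z hz)⟩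

lemma IsPathList.reverse (h : IsPathList H l) : IsPathList H l.reverse :=
  ⟨List.nodup_reverse.2 h.nodup,
    List.isChain_reverse.2 (h.isChain.imp fun _ _ hxy => hxy.symm)⟩

lemma isPathList_cons {v : V} :
    IsPathList H (v :: l) ↔ v ∉ l ∧ (∀ a ∈ l.head?, H.Adj v a) ∧ IsPathList H l := by
  constructor
  · rintro ⟨hn, hc⟩
    rw [List.nodup_cons] at hn
    rw [List.isChain_cons] at hc
    exact ⟨hn.1, hc.1, hn.2, hc.2⟩
  · rintro ⟨hv, ha, hl⟩
    exact ⟨List.nodup_cons.2 ⟨hv, hl.nodup⟩, List.isChain_cons.2 ⟨ha, hl.isChain⟩⟩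

variable [DecidableEq V]

lemma exists_isPathList_of_isCompleteBetween {X Y : Finset V}
    (h : H.IsCompleteBetween (X : Set V) Y) (hcard : #Y = #X + 1) :
    ∃ l, IsPathList H l ∧ EndsIn Y l ∧ l.toFinset = X ∪ Y := by
  induction X using Finset.induction_on generalizing Y with
  | empty =>
    obtain ⟨y, rfl⟩ := Finset.card_eq_one.1 hcard
    exact ⟨[y], ⟨by simp, by simp⟩, by simp [EndsIn], by simp⟩
  | insert x X hx ih =>
    obtain ⟨y, hy⟩ := Finset.card_pos.1 (by omega : 0 < #Y)
    have hxY : x ∉ Y := Set.disjoint_left.1 h.disjoint (by simp)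
    have hyX : y ∉ X := fun hyX => Set.disjoint_left.1 h.disjoint (by simp [hyX]) hy
    obtain ⟨l, hl, hends, hlXY⟩ := ih (Y := Y.erase y)
      (fun a ha b hb => h (by simp_all) (Finset.mem_of_mem_erase hb)) (by grind)
    have hmem : ∀ v, v ∈ l ↔ v ∈ X ∨ v ≠ y ∧ v ∈ Y := fun v => by
      rw [← List.mem_toFinset, hlXY, Finset.mem_union, Finset.mem_erase]
    refine ⟨y :: x :: l, ?_, ?_, by grind [List.mem_toFinset]⟩
    · refine isPathList_cons.2 ⟨by grind, ?_, isPathList_cons.2 ⟨by grind, ?_, hl⟩⟩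
      · simpa using (h (by simp) hy).symm
      · exact fun a ha => h (by simp) (Finset.mem_of_mem_erase (hends.1 a ha))
    · have hne : l ≠ [] := by
        rintro rfl
        obtain ⟨w, hw⟩ := Finset.card_pos.1 (by grind : 0 < #(Y.erase y))
        simpa using (hmem w).2 (Or.inr (Finset.mem_erase.1 hw))
      refine ⟨by simpa using hy, fun z hz => ?_⟩
      rw [List.getLast?_cons_cons, List.getLast?_cons_of_ne_nil hne] at hz
      exact Finset.mem_of_mem_erase (hends.2 z hz)

end Paths

section DepthFirstSearch

variable {V : Type*} [DecidableEq V] {H : SimpleGraph V} {S U D : Finset V} {P : List V}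

/-- A state of depth-first search in `H` restricted to `S`: `P` is the current path, listed from its
active end, `U` is the set of unvisited vertices, and `D` is the set of vertices that have been
abandoned. -/
structure IsDFSState (H : SimpleGraph V) (S : Finset V) (P : List V) (U D : Finset V) : Prop where
  isPathList : IsPathList H P
  union_eq : P.toFinset ∪ (U ∪ D) = S
  disjoint_path : Disjoint P.toFinset (U ∪ D)
  disjoint : Disjoint U D
  not_adj : ∀ u ∈ U, ∀ d ∈ D, ¬ H.Adj u d

lemma IsDFSState.push (h : IsDFSState H S P U D) {u : V} (hu : u ∈ U)
    (hadj : ∀ a ∈ P.head?, H.Adj u a) : IsDFSState H S (u :: P) (U.erase u) D := by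
  obtain ⟨hP, rfl, hdP, hd, hna⟩ := h
  simp only [Finset.disjoint_left, List.mem_toFinset, Finset.mem_union] at hdP hd
  exact
    { isPathList := isPathList_cons.2 ⟨by grind [List.mem_toFinset], hadj, hP⟩
      union_eq := by grind [List.mem_toFinset]
      disjoint_path := by rw [Finset.disjoint_left]; grind [List.mem_toFinset]
      disjoint := by rw [Finset.disjoint_left]; grind [List.mem_toFinset]
      not_adj := fun x hx => hna x (Finset.mem_of_mem_erase hx) }

lemma IsDFSState.pop {v : V} (h : IsDFSState H S (v :: P) U D)
    (hv : ∀ u ∈ U, ¬ H.Adj u v) : IsDFSState H S P U (insert v D) := by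
  obtain ⟨hP, rfl, hdP, hd, hna⟩ := h
  obtain ⟨hvP, -, hP⟩ := isPathList_cons.1 hP
  simp only [Finset.disjoint_left, List.mem_toFinset, Finset.mem_union] at hdP hd
  exact
    { isPathList := hP
      union_eq := by grind [List.mem_toFinset]
      disjoint_path := by rw [Finset.disjoint_left]; grind [List.mem_toFinset]
      disjoint := by rw [Finset.disjoint_left]; grind [List.mem_toFinset]
      not_adj := by grind [List.mem_toFinset] }

-- Each push or pop decreases `#U - #D` by one, so this difference takes every value
-- from `#S` down to `0`.
lemma exists_isDFSState (H : SimpleGraph V) (S : Finset V) {k : ℕ} (hk : k ≤ #S) :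
    ∃ P U D, IsDFSState H S P U D ∧ #U + k = #S + #D := by
  induction k with
  | zero => exact ⟨[], S, ∅, ⟨⟨by simp, by simp⟩, by simp, by simp, by simp, by simp⟩, by simp⟩
  | succ k ih =>
    obtain ⟨P, U, D, h, hcard⟩ := ih (by omega)
    by_cases hpush : ∃ u ∈ U, ∀ a ∈ P.head?, H.Adj u a
    · obtain ⟨u, hu, hadj⟩ := hpush
      have := Finset.card_erase_add_one hu
      exact ⟨_, _, _, h.push hu hadj, by omega⟩
    · obtain ⟨u, hu⟩ := Finset.card_pos.1 (show 0 < #U by omega)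
      cases P with
      | nil => exact absurd ⟨u, hu, by simp⟩ hpush
      | cons v P =>
        have hvD : v ∉ D := fun hvD => Finset.disjoint_left.1 h.disjoint_path
          (by simp) (Finset.mem_union_right U hvD)
        have := Finset.card_insert_of_notMem hvD
        exact ⟨_, _, _, h.pop fun u hu huv => hpush ⟨u, hu, by simpa using huv⟩, by omega⟩

end DepthFirstSearch

section Balanced

variable {V : Type*} [DecidableEq V] {A S T : Finset V}

/-- Half of the vertices of `S` lie in `A`; here `A` is one of the two classes of a bipartite
graph. -/
def IsBalanced (A S : Finset V) : Prop := #(S ∩ A) = #(S \ A)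

lemma IsBalanced.even_card (hS : IsBalanced A S) : Even #S :=
  ⟨#(S ∩ A), by rw [← Finset.card_inter_add_card_sdiff S A, ← hS]⟩

lemma IsBalanced.compl [Fintype V] (hS : IsBalanced A S) : IsBalanced Aᶜ S := by
  unfold IsBalanced at *
  rw [show S ∩ Aᶜ = S \ A by grind [Finset.mem_compl],
    show S \ Aᶜ = S ∩ A by grind [Finset.mem_compl], hS]

lemma IsBalanced.union (hS : IsBalanced A S) (hT : IsBalanced A T) (h : Disjoint S T) :
    IsBalanced A (S ∪ T) := by
  unfold IsBalanced at *
  rw [Finset.union_inter_distrib_right, Finset.union_sdiff_distrib,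
    Finset.card_union_of_disjoint (h.mono Finset.inter_subset_left Finset.inter_subset_left),
    Finset.card_union_of_disjoint (h.mono Finset.sdiff_subset Finset.sdiff_subset), hS, hT]

lemma IsBalanced.sdiff (hS : IsBalanced A S) (hT : IsBalanced A T) (h : T ⊆ S) :
    IsBalanced A (S \ T) := by
  unfold IsBalanced at *
  have hinter : #((S \ T) ∩ A) + #(T ∩ A) = #(S ∩ A) := by
    rw [← Finset.card_union_of_disjoint (by rw [Finset.disjoint_left]; grind)]
    congr 1; grind
  have hsdiff : #((S \ T) \ A) + #(T \ A) = #(S \ A) := by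
    rw [← Finset.card_union_of_disjoint (by rw [Finset.disjoint_left]; grind)]
    congr 1; grind
  omega

lemma isBalanced_union_of_card_eq (hS : S ⊆ A) (hT : Disjoint T A) (hcard : #S = #T) :
    IsBalanced A (S ∪ T) := by
  unfold IsBalanced
  rw [Finset.disjoint_left] at hT
  rwa [show (S ∪ T) ∩ A = S by grind, show (S ∪ T) \ A = T by grind]

end Balanced

section AlternatingPaths

variable {V : Type*} {A : Finset V} {l : List V}

lemma head_mem_iff_getLast_mem_iff_odd_length (halt : l.IsChain fun x y => x ∈ A ↔ y ∉ A) :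
    ∀ a ∈ l.head?, ∀ z ∈ l.getLast?, ((a ∈ A ↔ z ∈ A) ↔ Odd l.length) := by
  induction l with
  | nil => simp
  | cons a l ih =>
    cases l with
    | nil => simp
    | cons d l =>
      rw [List.isChain_cons_cons] at halt
      rintro _ ⟨⟩ z hz
      rw [List.getLast?_cons_cons] at hz
      rw [List.length_cons, Nat.odd_add_one, ← ih halt.2 d rfl z hz, halt.1]
      tauto

variable [DecidableEq V]

lemma isBalanced_toFinset_of_alternating {l : List V} (hl : l.Nodup)
    (halt : l.IsChain fun x y => x ∈ A ↔ y ∉ A) (heven : Even l.length) :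
    IsBalanced A l.toFinset := by
  match l, hl, halt, heven with
  | [], _, _, _ => simp [IsBalanced]
  | [a], _, _, heven => simp at heven
  | a :: d :: l, hl, halt, heven =>
    have had := (List.isChain_cons_cons.1 halt).1
    have hpair : IsBalanced A ({a} ∪ {d}) := by
      by_cases ha : a ∈ A
      · exact isBalanced_union_of_card_eq (by simpa) (by simpa using had.1 ha) rfl
      · rw [Finset.union_comm]
        exact isBalanced_union_of_card_eq (by simpa using fun hd => ha (had.2 hd)) (by simpa) rfl
    have hrest := isBalanced_toFinset_of_alternating (l := l)
      (by simp_all) halt.tail.tail (by simpa [Nat.even_add_one] using heven)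
    rw [List.toFinset_cons, List.toFinset_cons, Finset.insert_eq, Finset.insert_eq,
      ← Finset.union_assoc]
    exact hpair.union hrest (by simp_all)

lemma exists_isPathList_endsIn_of_alternating {H : SimpleGraph V} (hl : IsPathList H l)
    (halt : l.IsChain fun x y => x ∈ A ↔ y ∉ A) (heven : Even l.length) :
    ∃ q, IsPathList H q ∧ EndsIn A q ∧ q ⊆ l ∧ #(l.toFinset \ q.toFinset) ≤ 1 := by
  wlog hlast : ∀ z ∈ l.getLast?, z ∈ A generalizing l
  · have hhead : ∀ z ∈ l.reverse.getLast?, z ∈ A := by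
      push Not at hlast
      obtain ⟨z, hz, hzA⟩ := hlast
      intro a ha
      rw [List.getLast?_reverse] at ha
      have := head_mem_iff_getLast_mem_iff_odd_length halt a ha z hz
      grind
    obtain ⟨q, hq, hends, hsub, hcard⟩ := this hl.reverse
      (List.isChain_reverse.2 (halt.imp fun x y hxy => by tauto)) (by simpa) hhead
    exact ⟨q, hq, hends, fun x hx => List.mem_reverse.1 (hsub hx), by simpa using hcard⟩
  match l with
  | [] => exact ⟨[], hl, by simp [EndsIn], by simp, by simp⟩
  | [a] => simp at heven
  | a :: d :: l =>
    have hpar := head_mem_iff_getLast_mem_iff_odd_length halt a rfl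
    rw [List.isChain_cons_cons] at halt
    refine ⟨d :: l, (isPathList_cons.1 hl).2.2, ⟨fun x hx => ?_, fun z hz => hlast z ?_⟩,
      List.subset_cons_self a _, (Finset.card_le_card (t := {a}) ?_).trans (by simp)⟩
    · obtain ⟨z, hz⟩ := Option.isSome_iff_exists.1 (show (a :: d :: l).getLast?.isSome by simp)
      have haA : a ∉ A := by
        have := hpar z hz
        have := hlast z hz
        grind
      have hdA : d ∈ A := by grind
      simp_all
    · rwa [List.getLast?_cons_cons]
    · grind [List.mem_toFinset]

end AlternatingPaths

section Cycles

variable {V : Type*} {G : SimpleGraph V} {c : Sym2 V → Bool} {b : Bool} {x y : V}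

lemma monoSubgraph_adj : (monoSubgraph G c b).Adj x y ↔ G.Adj x y ∧ c s(x, y) = b := by
  simp only [monoSubgraph, fromEdgeSet_adj, mem_ofPred_eq, mem_edgeSet, and_iff_left_iff_imp]
  exact fun h => h.1.ne

lemma monoSubgraph_le : monoSubgraph G c b ≤ G := fun _ _ h => (monoSubgraph_adj.1 h).1

lemma isMonoCycleSet_support {p : (monoSubgraph G c b).Walk x x} (hp : p.IsCycle) :
    IsMonoCycleSet G c b {v | v ∈ p.support} := by
  refine Or.inr (Or.inr (Or.inr ⟨x, p.mapLe monoSubgraph_le, hp.mapLe _, fun e he => ?_, ?_⟩))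
  · rw [Walk.edges_mapLe_eq_edges] at he
    induction e with
    | _ u v => exact (monoSubgraph_adj.1 (p.adj_of_mem_edges he)).2
  · rw [Walk.support_mapLe_eq_support]

variable [DecidableEq V]

lemma isMonoCycleSet_insert {q : List V} (hq : IsPathList (monoSubgraph G c b) q) (hy : y ∉ q)
    (hends : EndsIn {v | (monoSubgraph G c b).Adj y v} q) :
    IsMonoCycleSet G c b ↑(insert y q.toFinset) := by
  match q with
  | [] => exact Or.inr (Or.inl ⟨y, by simp⟩)
  | [a] =>
    obtain ⟨hadj, hcol⟩ := monoSubgraph_adj.1 (hends.1 a rfl)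
    exact Or.inr (Or.inr (Or.inl ⟨y, a, hadj, hcol, by simp⟩))
  | a :: d :: q =>
    set l := a :: d :: q with hl
    have hne : l ≠ [] := List.cons_ne_nil _ _
    let p := Walk.ofSupport l hne hq.isChain
    have hp : p.IsPath := Walk.IsPath.mk' (by rw [Walk.support_ofSupport]; exact hq.nodup)
    have hhead : (monoSubgraph G c b).Adj y (l.head hne) := hends.1 _ (List.head?_eq_some_head hne)
    have hlast : (monoSubgraph G c b).Adj y (l.getLast hne) :=
      hends.2 _ (List.getLast?_eq_some_getLast hne)
    have hcycle : (Walk.cons hlast.symm (Walk.cons hhead p)).IsCycle :=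
      Walk.isCycle_iff_isPath_tail_and_le_length.2
        ⟨by simpa [p, Walk.support_ofSupport, Walk.cons_isPath_iff, hp] using hy,
          by simp [p, Walk.length_ofSupport, hl]⟩
    convert isMonoCycleSet_support hcycle using 1
    ext v
    have := List.getLast_mem hne
    simp only [p, Walk.support_cons, Walk.support_ofSupport, mem_ofPred_eq, List.mem_cons,
      Finset.coe_insert, Set.mem_insert_iff, Finset.mem_coe, List.mem_toFinset]
    grind

lemma isMonoCycleSet_union_of_isCompleteBetween {X Y : Finset V}
    (h : (monoSubgraph G c b).IsCompleteBetween (X : Set V) Y) (hcard : #X = #Y) :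
    IsMonoCycleSet G c b ↑(X ∪ Y) := by
  obtain rfl | ⟨x, hx⟩ := X.eq_empty_or_nonempty
  · obtain rfl := Finset.card_eq_zero.1 hcard.symm
    exact Or.inl (by simp)
  · obtain ⟨q, hq, hends, hqXY⟩ := exists_isPathList_of_isCompleteBetween (X := X.erase x) (Y := Y)
      (fun u hu v hv => h (Finset.mem_of_mem_erase hu) hv)
      (by rw [Finset.card_erase_add_one hx, hcard])
    have hxY : x ∉ Y := fun hxY => Set.disjoint_left.1 h.disjoint hx hxY
    have hxq : x ∉ q := by
      rw [← List.mem_toFinset, hqXY]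
      simp [hxY]
    have hcycle := isMonoCycleSet_insert hq hxq (hends.imp fun v _ hv => h hx hv)
    rwa [hqXY, ← Finset.insert_union, Finset.insert_erase hx] at hcycle

end Cycles

section CyclePartitions

variable {V : Type*} {G : SimpleGraph V} {c : Sym2 V → Bool} {S T : Finset V} {j k : ℕ}

/-- `S` is the disjoint union of the vertex sets of at most `k` monochromatic cycles of `G`. There
are exactly `k` of these sets, but some of them may be empty. -/
def HasCyclePartition (G : SimpleGraph V) (c : Sym2 V → Bool) (k : ℕ) (S : Finset V) : Prop :=
  ∃ C : Fin k → Set V, (∀ i, ∃ b, IsMonoCycleSet G c b (C i)) ∧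
    (∀ i j, i ≠ j → Disjoint (C i) (C j)) ∧ ⋃ i, C i = S

lemma IsMonoCycleSet.hasCyclePartition {b : Bool} (h : IsMonoCycleSet G c b (S : Set V)) :
    HasCyclePartition G c 1 S :=
  ⟨fun _ => S, fun _ => ⟨b, h⟩, fun i j hij => (hij (Subsingleton.elim i j)).elim,
    iUnion_const _⟩

lemma hasCyclePartition_empty : HasCyclePartition G c k ∅ :=
  ⟨fun _ => ∅, fun _ => ⟨true, Or.inl rfl⟩, fun _ _ _ => disjoint_bot_left, by simp⟩

lemma HasCyclePartition.union [DecidableEq V] (hS : HasCyclePartition G c j S)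
    (hT : HasCyclePartition G c k T) (h : Disjoint S T) :
    HasCyclePartition G c (j + k) (S ∪ T) := by
  obtain ⟨C, hC, hCdisj, hCS⟩ := hS
  obtain ⟨D, hD, hDdisj, hDT⟩ := hT
  have hCD : ∀ i i', Disjoint (C i) (D i') := fun i i' =>
    (Finset.disjoint_coe.2 h).mono (hCS ▸ subset_iUnion C i) (hDT ▸ subset_iUnion D i')
  refine ⟨Fin.append C D, ?_, ?_, ?_⟩
  · simpa only [Fin.forall_fin_add, Fin.append_left, Fin.append_right] using ⟨hC, hD⟩
  · simp only [Fin.forall_fin_add, Fin.append_left, Fin.append_right]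
    exact ⟨fun i => ⟨fun i' hi => hCdisj i i' (by grind), fun i' _ => hCD i i'⟩,
      fun i => ⟨fun i' _ => (hCD i' i).symm, fun i' hi => hDdisj i i' (by grind)⟩⟩
  · rw [Finset.coe_union, ← hCS, ← hDT]
    refine Subset.antisymm (iUnion_subset ?_) (union_subset (iUnion_subset ?_) (iUnion_subset ?_))
    · simp only [Fin.forall_fin_add, Fin.append_left, Fin.append_right]
      exact ⟨fun i => subset_union_of_subset_left (subset_iUnion C i) _,
        fun i => subset_union_of_subset_right (subset_iUnion D i) _⟩
    · exact fun i => (Fin.append_left C D i).symm.subset.trans (subset_iUnion _ _)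
    · exact fun i => (Fin.append_right C D i).symm.subset.trans (subset_iUnion _ _)

lemma HasCyclePartition.mono (h : HasCyclePartition G c j S) (hjk : j ≤ k) :
    HasCyclePartition G c k S := by
  classical
  obtain ⟨k, rfl⟩ := Nat.exists_eq_add_of_le hjk
  simpa using h.union (hasCyclePartition_empty (k := k)) (Finset.disjoint_empty_right S)

lemma hasCyclePartition_of_card_le (hk : #S ≤ k) : HasCyclePartition G c k S := by
  refine HasCyclePartition.mono ⟨fun i => {(S.equivFin.symm i : V)}, fun i => ⟨true, ?_⟩, ?_, ?_⟩ hk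
  · exact Or.inr (Or.inl ⟨_, rfl⟩)
  · intro i j hij
    simpa [Subtype.coe_inj] using hij
  · exact (iUnion_singleton_eq_range _).trans
      ((S.equivFin.symm.surjective.range_comp Subtype.val).trans Subtype.range_coe)

end CyclePartitions

section CompleteBipartite

variable {V : Type*} {G : SimpleGraph V} {c : Sym2 V → Bool} {b : Bool} {A S U D X Y : Finset V}

/-- `G` is the complete bipartite graph whose classes are `A` and its complement. -/
def IsCompleteBipartiteWith (G : SimpleGraph V) (A : Finset V) : Prop :=
  ∀ x y, G.Adj x y ↔ (x ∈ A ↔ y ∉ A)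

lemma IsCompleteBipartiteWith.compl [Fintype V] [DecidableEq V]
    (hG : IsCompleteBipartiteWith G A) : IsCompleteBipartiteWith G Aᶜ := fun x y => by
  rw [hG, Finset.mem_compl, Finset.mem_compl]
  tauto

lemma IsCompleteBipartiteWith.isCompleteBetween_of_not_adj (hG : IsCompleteBipartiteWith G A)
    (hX : X ⊆ A) (hY : Disjoint Y A) (h : ∀ x ∈ X, ∀ y ∈ Y, ¬ (monoSubgraph G c b).Adj x y) :
    (monoSubgraph G c !b).IsCompleteBetween (X : Set V) Y := fun x hx y hy => by
  have hxy : G.Adj x y := (hG x y).2 (iff_of_true (hX hx) (Finset.disjoint_left.1 hY hy))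
  have := h x hx y hy
  rw [monoSubgraph_adj] at this ⊢
  exact ⟨hxy, Bool.eq_not.2 fun hb => this ⟨hxy, hb⟩⟩

variable [DecidableEq V]

lemma IsCompleteBipartiteWith.hasCyclePartition_union_of_not_adj
    (hG : IsCompleteBipartiteWith G A) (hbal : IsBalanced A (U ∪ D)) (hcard : #U = #D)
    (hUD : Disjoint U D) (h : ∀ u ∈ U, ∀ d ∈ D, ¬ (monoSubgraph G c b).Adj u d) :
    HasCyclePartition G c 2 (U ∪ D) := by
  have hU := Finset.card_inter_add_card_sdiff U A
  have hD := Finset.card_inter_add_card_sdiff D A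
  have hinter : #((U ∪ D) ∩ A) = #(U ∩ A) + #(D ∩ A) := by
    rw [Finset.union_inter_distrib_right,
      Finset.card_union_of_disjoint (hUD.mono Finset.inter_subset_left Finset.inter_subset_left)]
  have hsdiff : #((U ∪ D) \ A) = #(U \ A) + #(D \ A) := by
    rw [Finset.union_sdiff_distrib,
      Finset.card_union_of_disjoint (hUD.mono Finset.sdiff_subset Finset.sdiff_subset)]
  rw [IsBalanced, hinter, hsdiff] at hbal
  have hUA := isMonoCycleSet_union_of_isCompleteBetween (X := U ∩ A) (Y := D \ A)
    (hG.isCompleteBetween_of_not_adj Finset.inter_subset_right Finset.sdiff_disjoint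
      fun x hx y hy => h x (Finset.mem_inter.1 hx).1 y (Finset.mem_sdiff.1 hy).1) (by omega)
  have hDA := isMonoCycleSet_union_of_isCompleteBetween (X := D ∩ A) (Y := U \ A)
    (hG.isCompleteBetween_of_not_adj Finset.inter_subset_right Finset.sdiff_disjoint
      fun x hx y hy hxy => h y (Finset.mem_sdiff.1 hy).1 x (Finset.mem_inter.1 hx).1 hxy.symm)
    (by omega)
  have huv := hUA.hasCyclePartition.union hDA.hasCyclePartition (by
    rw [Finset.disjoint_left] at hUD ⊢
    grind)
  rwa [show U ∩ A ∪ D \ A ∪ (D ∩ A ∪ U \ A) = U ∪ D by grind] at huv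

-- Two cycles of the other colour cover the unvisited and the abandoned vertices; the third cycle is
-- the end vertex of the search path that may have to be dropped to get both ends into `A`.
lemma IsCompleteBipartiteWith.exists_isPathList_hasCyclePartition_sdiff
    (hG : IsCompleteBipartiteWith G A) (c : Sym2 V → Bool) (b : Bool) (hS : IsBalanced A S) :
    ∃ q, IsPathList (monoSubgraph G c b) q ∧ EndsIn A q ∧ q.toFinset ⊆ S ∧
      HasCyclePartition G c 3 (S \ q.toFinset) := by
  obtain ⟨P, U, D, hstate, hcard⟩ := exists_isDFSState (monoSubgraph G c b) S le_rfl
  have hUD : #U = #D := by omega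
  have halt : P.IsChain fun x y => x ∈ A ↔ y ∉ A :=
    hstate.isPathList.isChain.imp fun x y hxy => (hG x y).1 (monoSubgraph_le hxy)
  have heven : Even P.length := by
    have hPUD := Finset.card_union_of_disjoint hstate.disjoint_path
    rw [hstate.union_eq, Finset.card_union_of_disjoint hstate.disjoint, hUD,
      List.toFinset_card_of_nodup hstate.isPathList.nodup] at hPUD
    have := hS.even_card
    grind
  have hPbal := isBalanced_toFinset_of_alternating hstate.isPathList.nodup halt heven
  obtain ⟨q, hq, hends, hqP, hdrop⟩ :=
    exists_isPathList_endsIn_of_alternating hstate.isPathList halt heven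
  have hPS : P.toFinset ⊆ S := hstate.union_eq ▸ Finset.subset_union_left
  have hrest : S \ P.toFinset = U ∪ D := by
    rw [← hstate.union_eq, Finset.union_sdiff_cancel_left hstate.disjoint_path]
  have hqP' : q.toFinset ⊆ P.toFinset := fun v hv => by
    simpa using hqP (List.mem_toFinset.1 hv)
  refine ⟨q, hq, hends, hqP'.trans hPS, ?_⟩
  have hUDcycles := hG.hasCyclePartition_union_of_not_adj (hrest ▸ hS.sdiff hPbal hPS) hUD
    hstate.disjoint hstate.not_adj
  have hcycles := hUDcycles.union (hasCyclePartition_of_card_le hdrop)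
    (hstate.disjoint_path.symm.mono_right Finset.sdiff_subset)
  rwa [← hrest, show S \ P.toFinset ∪ P.toFinset \ q.toFinset = S \ q.toFinset by grind]
    at hcycles

end CompleteBipartite

section Neighbors

variable {V : Type*} {G : SimpleGraph V} {c : Sym2 V → Bool} {b : Bool} {A S X Y : Finset V}
  {q : List V} {x : V}

open Classical in
/-- The neighbours of `v` in `H` that lie in `X`. -/
noncomputable def neighborsIn (H : SimpleGraph V) (X : Finset V) (v : V) : Finset V :=
  {x ∈ X | H.Adj v x}

lemma mem_neighborsIn {H : SimpleGraph V} {v x : V} :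
    x ∈ neighborsIn H X v ↔ x ∈ X ∧ H.Adj v x := by
  simp [neighborsIn]

lemma neighborsIn_subset {H : SimpleGraph V} {v : V} : neighborsIn H X v ⊆ X :=
  fun _ hx => (mem_neighborsIn.1 hx).1

lemma neighborsIn_eq_self_of_isCompleteBetween {H : SimpleGraph V}
    (h : H.IsCompleteBetween (X : Set V) Y) {v : V} (hv : v ∈ X) : neighborsIn H Y v = Y := by
  ext y
  rw [mem_neighborsIn, and_iff_left_iff_imp]
  exact fun hy => h hv hy

/-- The vertices of `S` that have at most one neighbour of `H` in `X`. -/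
noncomputable def fewNeighbors (H : SimpleGraph V) (S X : Finset V) : Finset V :=
  {v ∈ S | #(neighborsIn H X v) ≤ 1}

lemma mem_fewNeighbors {H : SimpleGraph V} {v : V} :
    v ∈ fewNeighbors H S X ↔ v ∈ S ∧ #(neighborsIn H X v) ≤ 1 :=
  Finset.mem_filter

lemma IsCompleteBipartiteWith.card_neighborsIn_add_card_neighborsIn_not
    (hG : IsCompleteBipartiteWith G A) (hX : X ⊆ A) (c : Sym2 V → Bool) (b : Bool) {v : V}
    (hv : v ∉ A) :
    #(neighborsIn (monoSubgraph G c b) X v) + #(neighborsIn (monoSubgraph G c !b) X v) = #X := by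
  classical
  have hadj : ∀ x ∈ X, G.Adj v x := fun x hx => (hG v x).2 (by simp [hv, hX hx])
  rw [← Finset.card_union_of_disjoint]
  · congr 1
    ext x
    have := hadj x
    rw [Finset.mem_union, mem_neighborsIn, mem_neighborsIn, monoSubgraph_adj, monoSubgraph_adj,
      Bool.eq_not]
    tauto
  · simp +contextual [Finset.disjoint_left, mem_neighborsIn, monoSubgraph_adj]

variable [DecidableEq V]

lemma exists_isMonoCycleSet_insert (hq : IsPathList (monoSubgraph G c b) q)
    (hends : EndsIn {v | #X < 2 * #(neighborsIn (monoSubgraph G c b) X v)} q)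
    (hdisj : Disjoint q.toFinset X) (hX : X.Nonempty) :
    ∃ x ∈ X, IsMonoCycleSet G c b ↑(insert x q.toFinset) := by
  rw [Finset.disjoint_right] at hdisj
  suffices ∃ x ∈ X, EndsIn {v | (monoSubgraph G c b).Adj x v} q by
    obtain ⟨x, hx, hxq⟩ := this
    exact ⟨x, hx, isMonoCycleSet_insert hq (by simpa using hdisj hx) hxq⟩
  obtain rfl | hne := eq_or_ne q []
  · obtain ⟨x, hx⟩ := hX
    exact ⟨x, hx, by simp [EndsIn]⟩
  · have hhead := hends.1 _ (List.head?_eq_some_head hne)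
    have hlast := hends.2 _ (List.getLast?_eq_some_getLast hne)
    rw [Set.mem_ofPred_eq] at hhead hlast
    have hcard : #X < #(neighborsIn (monoSubgraph G c b) X (q.head hne)) +
        #(neighborsIn (monoSubgraph G c b) X (q.getLast hne)) := by omega
    obtain ⟨x, hx⟩ := Finset.inter_nonempty_of_card_lt_card_add_card neighborsIn_subset
      neighborsIn_subset hcard
    rw [Finset.mem_inter, mem_neighborsIn, mem_neighborsIn] at hx
    refine ⟨x, hx.1.1, ?_, ?_⟩
    · simpa [List.head?_eq_some_head hne] using hx.1.2.symm
    · simpa [List.getLast?_eq_some_getLast hne] using hx.2.2.symm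

lemma exists_isMonoCycleSet_subset (hq : IsPathList (monoSubgraph G c b) q)
    (hxY : ∀ y ∈ Y, (monoSubgraph G c b).Adj x y)
    (hends : EndsIn {v | 1 < #(neighborsIn (monoSubgraph G c b) Y v)} q)
    (hxq : x ∉ q) (hdisj : Disjoint q.toFinset Y) :
    ∃ C : Finset V, IsMonoCycleSet G c b C ∧ insert x q.toFinset ⊆ C ∧
      C ⊆ insert x (q.toFinset ∪ Y) := by
  obtain rfl | hne := eq_or_ne q []
  · exact ⟨{x}, Or.inr (Or.inl ⟨x, by simp⟩), by simp, by simp⟩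
  · rw [Finset.disjoint_right] at hdisj
    simp only [List.mem_toFinset] at hdisj
    have hhead := hends.1 _ (List.head?_eq_some_head hne)
    obtain ⟨y, hy⟩ := Finset.card_pos.1 (zero_lt_one.trans hhead)
    obtain ⟨z, hz, hzy⟩ := Finset.exists_mem_ne (hends.2 _ (List.getLast?_eq_some_getLast hne)) y
    rw [mem_neighborsIn] at hy hz
    have hyq : IsPathList (monoSubgraph G c b) (y :: q) := isPathList_cons.2
      ⟨hdisj hy.1, by simpa [List.head?_eq_some_head hne] using hy.2.symm, hq⟩
    have hzyq : IsPathList (monoSubgraph G c b) (z :: (y :: q).reverse) := isPathList_cons.2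
      ⟨by simpa [hzy] using hdisj hz.1,
        by simpa [List.getLast?_cons, List.getLast?_eq_some_getLast hne] using hz.2.symm,
        hyq.reverse⟩
    refine ⟨_, isMonoCycleSet_insert hzyq (y := x) ?_ ⟨?_, ?_⟩, ?_, ?_⟩
    · have := (hxY y hy.1).ne
      have := (hxY z hz.1).ne
      grind
    · simpa using hxY z hz.1
    · rw [List.reverse_cons, ← List.cons_append, List.getLast?_concat]
      simpa using hxY y hy.1
    · grind [List.mem_toFinset]
    · grind [List.mem_toFinset]

lemma IsCompleteBipartiteWith.exists_hasCyclePartition_insert (hG : IsCompleteBipartiteWith G A)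
    (hS : IsBalanced A S) (hX : X.Nonempty) (hdisj : Disjoint S X)
    (h : ∀ v ∈ S, v ∈ A → #X < 2 * #(neighborsIn (monoSubgraph G c b) X v)) :
    ∃ x ∈ X, HasCyclePartition G c 4 (insert x S) := by
  obtain ⟨q, hq, hends, hqS, hcycles⟩ := hG.exists_isPathList_hasCyclePartition_sdiff c b hS
  obtain ⟨x, hx, hcycle⟩ := exists_isMonoCycleSet_insert hq
    (hends.imp fun v hv => h v (hqS (List.mem_toFinset.2 hv))) (hdisj.mono_left hqS) hX
  have hxS : x ∉ S := Finset.disjoint_right.1 hdisj hx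
  refine ⟨x, hx, ?_⟩
  have hunion := hcycles.union hcycle.hasCyclePartition
    (Finset.disjoint_insert_right.2 ⟨by simp [hxS], Finset.sdiff_disjoint⟩)
  rwa [Finset.union_insert, Finset.sdiff_union_of_subset hqS] at hunion

lemma IsCompleteBipartiteWith.exists_hasCyclePartition_union (hG : IsCompleteBipartiteWith G A)
    (hS : IsBalanced A S) (hxS : x ∉ S) (hdisj : Disjoint S Y)
    (hxY : ∀ y ∈ Y, (monoSubgraph G c b).Adj x y)
    (h : ∀ v ∈ S, v ∈ A → 1 < #(neighborsIn (monoSubgraph G c b) Y v)) :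
    ∃ C ⊆ insert x Y, x ∈ C ∧ HasCyclePartition G c 4 (S ∪ C) := by
  obtain ⟨q, hq, hends, hqS, hcycles⟩ := hG.exists_isPathList_hasCyclePartition_sdiff c b hS
  obtain ⟨C, hcycle, hqC, hCq⟩ := exists_isMonoCycleSet_subset hq hxY
    (hends.imp fun v hv => h v (hqS (List.mem_toFinset.2 hv)))
    (fun hxq => hxS (hqS (List.mem_toFinset.2 hxq))) (hdisj.mono_left hqS)
  rw [Finset.disjoint_left] at hdisj
  refine ⟨C \ S, by grind, by grind, ?_⟩
  have hunion := hcycles.union hcycle.hasCyclePartition (by rw [Finset.disjoint_left]; grind)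
  rwa [show S \ q.toFinset ∪ C = S ∪ C \ S by grind] at hunion

end Neighbors

lemma exists_subset_monochromatic {α β : Type*} (c : α → β → Bool)
    {X : Finset α} {Y : Finset β} {t : ℕ} (hX : 2 * t < #X) (hY : t * 2 ^ (2 * t + 1) < #Y) :
    ∃ b, ∃ X' ⊆ X, ∃ Y' ⊆ Y, #X' = t + 1 ∧ #Y' = t + 1 ∧ ∀ x ∈ X', ∀ y ∈ Y', c x y = b := by
  classical
  obtain ⟨Z, hZX, hZ⟩ := Finset.exists_subset_card_eq (Nat.succ_le_of_lt hX)
  obtain ⟨N, -, hfiber⟩ := Finset.exists_lt_card_fiber_of_mul_lt_card_of_maps_to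
    (s := Y) (t := Z.powerset) (n := t) (f := fun y => {x ∈ Z | c x y = true})
    (fun y _ => by simp) (by rwa [Finset.card_powerset, hZ, mul_comm])
  obtain ⟨Y', hY', hY'card⟩ := Finset.exists_subset_card_eq (Nat.succ_le_of_lt hfiber)
  have hN' : ∀ y ∈ Y', ∀ x ∈ Z, x ∈ N ↔ c x y = true := fun y hy x hx => by
    rw [← (Finset.mem_filter.1 (hY' hy)).2, Finset.mem_filter, and_iff_right hx]
  obtain ⟨b, -, hb⟩ := Finset.exists_lt_card_fiber_of_mul_lt_card_of_maps_to
    (s := Z) (t := Finset.univ) (n := t) (f := fun x => decide (x ∈ N))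
    (fun x _ => Finset.mem_univ _) (by rw [Finset.card_univ, Fintype.card_bool, hZ]; omega)
  obtain ⟨X', hX', hX'card⟩ := Finset.exists_subset_card_eq (Nat.succ_le_of_lt hb)
  refine ⟨b, X', fun x hx => hZX (Finset.mem_filter.1 (hX' hx)).1, Y',
    hY'.trans (Finset.filter_subset _ _), hX'card, hY'card, fun x hx y hy => ?_⟩
  obtain ⟨hxZ, rfl⟩ := Finset.mem_filter.1 (hX' hx)
  rw [Bool.eq_iff_iff, ← hN' y hy x hxZ, decide_eq_true_iff]

section TwelveCycles

variable {V : Type*} [Fintype V] [DecidableEq V] {G : SimpleGraph V} {c : Sym2 V → Bool} {b : Bool}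
  {A S X Y : Finset V}

lemma IsCompleteBipartiteWith.hasCyclePartition_univ_of_exceptional
    (hG : IsCompleteBipartiteWith G A) (hbal : IsBalanced A Finset.univ)
    (hX : X ⊆ A) (hY : Disjoint Y A) (hXcard : #X = 3) (hYcard : #Y = 3)
    (hXY : (monoSubgraph G c b).IsCompleteBetween (X : Set V) Y)
    (hS : IsBalanced A S) (hdisj : Disjoint S (X ∪ Y))
    (hSX : ∀ v ∈ S, v ∉ A → 1 < #(neighborsIn (monoSubgraph G c !b) X v))
    (hSY : ∀ v ∈ A, v ∉ S → 1 < #(neighborsIn (monoSubgraph G c b) Y v)) :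
    HasCyclePartition G c 12 Finset.univ := by
  have hrest : IsBalanced A (Finset.univ \ (X ∪ Y ∪ S)) :=
    hbal.sdiff ((isBalanced_union_of_card_eq hX hY (hXcard.trans hYcard.symm)).union hS hdisj.symm)
      (Finset.subset_univ _)
  obtain ⟨x, hx, hxcycles⟩ := hG.compl.exists_hasCyclePartition_insert
    (c := c) (b := !b) (X := X) hS.compl
    (Finset.card_pos.1 (by omega)) (hdisj.mono_right Finset.subset_union_left)
    (fun v hv hvA => by
      have := hSX v hv (Finset.mem_compl.1 hvA)
      omega)
  obtain ⟨x', hx', hxx'⟩ := Finset.exists_mem_ne (by omega : 1 < #X) x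
  obtain ⟨C, hCY, hxC, hCcycles⟩ := hG.exists_hasCyclePartition_union (x := x') (Y := Y) hrest
    (by simp [hx']) (Finset.sdiff_disjoint.mono_right (by grind)) (fun y hy => hXY hx' hy)
    (fun v hv hvA => hSY v hvA (by grind))
  have hleft : #((X ∪ Y) \ insert x C) ≤ 4 := by
    have hpair : #((X ∪ Y) \ {x, x'}) = #(X ∪ Y) - 2 := by
      rw [Finset.card_sdiff_of_subset (by grind), Finset.card_pair hxx'.symm]
    have hsub := Finset.card_le_card
      (show (X ∪ Y) \ insert x C ⊆ (X ∪ Y) \ {x, x'} by grind)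
    have := Finset.card_union_le X Y
    omega
  have hXY' : Disjoint X Y := Finset.disjoint_coe.1 hXY.disjoint
  rw [Finset.disjoint_left] at hdisj hXY'
  have hcover := (hxcycles.union hCcycles (by rw [Finset.disjoint_left]; grind)).union
    (hasCyclePartition_of_card_le hleft) (by rw [Finset.disjoint_left]; grind)
  convert hcover
  ext v
  grind

lemma IsCompleteBipartiteWith.hasCyclePartition_univ_of_card_fewNeighbors_le
    (hG : IsCompleteBipartiteWith G A) (hbal : IsBalanced A Finset.univ)
    (hX : X ⊆ A) (hY : Disjoint Y A) (hXcard : #X = 3) (hYcard : #Y = 3)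
    (hXY : (monoSubgraph G c b).IsCompleteBetween (X : Set V) Y)
    (hcard : #(fewNeighbors (monoSubgraph G c b) A Y) ≤
      #(fewNeighbors (monoSubgraph G c b) Aᶜ X)) :
    HasCyclePartition G c 12 Finset.univ := by
  obtain ⟨T, hT, hTcard⟩ := Finset.exists_subset_card_eq hcard
  simp only [Finset.subset_iff, mem_fewNeighbors, Finset.mem_compl] at hT
  have hTA : Disjoint T A := Finset.disjoint_left.2 fun v hv => (hT hv).1
  have hXfew : ∀ y ∈ Y, #(neighborsIn (monoSubgraph G c b) X y) = 3 := fun y hy => by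
    rw [neighborsIn_eq_self_of_isCompleteBetween hXY.symm hy, hXcard]
  have hYfew : ∀ x ∈ X, #(neighborsIn (monoSubgraph G c b) Y x) = 3 := fun x hx => by
    rw [neighborsIn_eq_self_of_isCompleteBetween hXY hx, hYcard]
  rw [Finset.disjoint_left] at hY
  refine hG.hasCyclePartition_univ_of_exceptional
    (S := fewNeighbors (monoSubgraph G c b) A Y ∪ T) hbal hX (Finset.disjoint_left.2 hY) hXcard
    hYcard hXY (isBalanced_union_of_card_eq (Finset.filter_subset _ _) hTA hTcard.symm) ?_ ?_ ?_
  · rw [Finset.disjoint_left]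
    grind [mem_fewNeighbors]
  · intro v hv hvA
    have hvT : v ∈ T := by grind [mem_fewNeighbors]
    have := hG.card_neighborsIn_add_card_neighborsIn_not hX c b hvA
    have := (hT hvT).2
    omega
  · intro v hvA hv
    grind [mem_fewNeighbors]

theorem IsCompleteBipartiteWith.hasCyclePartition_univ (hG : IsCompleteBipartiteWith G A)
    (c : Sym2 V → Bool) (hbal : IsBalanced A Finset.univ) (hA : 64 < #A) :
    HasCyclePartition G c 12 Finset.univ := by
  have hAc : 64 < #Aᶜ := by
    rwa [Finset.compl_eq_univ_sdiff, ← hbal, Finset.univ_inter]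
  obtain ⟨b, X, hX, Y, hY, hXcard, hYcard, hXY⟩ :=
    exists_subset_monochromatic (fun x y => c s(x, y)) (t := 2) (by omega : 4 < #A) hAc
  have hYA : Disjoint Y A := disjoint_compl_left.mono_left hY
  have hcomplete : (monoSubgraph G c b).IsCompleteBetween (X : Set V) Y := fun x hx y hy =>
    monoSubgraph_adj.2 ⟨(hG x y).2 (iff_of_true (hX hx) (Finset.mem_compl.1 (hY hy))),
      hXY x hx y hy⟩
  obtain h | h := le_total #(fewNeighbors (monoSubgraph G c b) A Y)
    #(fewNeighbors (monoSubgraph G c b) Aᶜ X)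
  · exact hG.hasCyclePartition_univ_of_card_fewNeighbors_le hbal hX hYA hXcard hYcard hcomplete h
  · exact hG.compl.hasCyclePartition_univ_of_card_fewNeighbors_le hbal.compl hY
      (disjoint_compl_right.mono_left hX) hYcard hXcard hcomplete.symm (by rwa [compl_compl])

end TwelveCycles

lemma isBalanced_univ_of_fair {V : Type*} [Fintype V] [DecidableEq V] (f : V → Fin 2)
    (hfair : ∀ i, 2 * ({v | f v = i} : Set V).ncard ≤ Fintype.card V) :
    IsBalanced ({v | f v = 0} : Finset V) Finset.univ := by
  have hcard : ∀ i, ({v | f v = i} : Set V).ncard = #{v | f v = i} := fun i => by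
    rw [← Set.ncard_coe_finset, Finset.coe_filter_univ]
  have h0 := hcard 0 ▸ hfair 0
  have h1 := hcard 1 ▸ hfair 1
  have hsum := Finset.card_filter_add_card_filter_not (s := Finset.univ) fun v => f v = 0
  have hone : ∀ v, ¬ f v = 0 ↔ f v = 1 := fun v => by omega
  rw [IsBalanced, Finset.univ_inter, ← Finset.compl_eq_univ_sdiff, Finset.compl_filter]
  simp only [hone, Finset.card_univ] at hsum ⊢
  omega

/-- There is an `n₀` such that every fair (i.e. balanced) complete bipartite graph on more
than `n₀` vertices whose edges are coloured red and blue can be partitioned into 12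
vertex-disjoint monochromatic (possibly degenerate) cycles. -/
theorem stmt4 :
    ∃ n₀ : ℕ, ∀ (V : Type) [Fintype V],
      ∀ (f : V → Fin 2) (G : SimpleGraph V) (c : Sym2 V → Bool),
        Function.Surjective f → (∀ x y, G.Adj x y ↔ f x ≠ f y) →
        (∀ i : Fin 2, 2 * ({v | f v = i} : Set V).ncard ≤ Fintype.card V) →
        n₀ < Fintype.card V →
        ∃ S : Fin 12 → Set V, (∀ i, ∃ b, IsMonoCycleSet G c b (S i)) ∧
          (∀ i j, i ≠ j → Disjoint (S i) (S j)) ∧ (⋃ i, S i) = Set.univ := by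
  classical
  refine ⟨128, fun V _ f G c _ hG hfair hV => ?_⟩
  have hbip : IsCompleteBipartiteWith G ({v | f v = 0} : Finset V) := fun x y => by
    rw [hG, Finset.mem_filter_univ, Finset.mem_filter_univ]
    omega
  have hbal := isBalanced_univ_of_fair f hfair
  have hlarge : 64 < #{v | f v = 0} := by
    have hsum := Finset.card_inter_add_card_sdiff Finset.univ {v | f v = 0}
    rw [← hbal, Finset.univ_inter, Finset.card_univ] at hsum
    omega
  simpa [HasCyclePartition] using hbip.hasCyclePartition_univ c hbal hlarge
end

section
/- Let G be a fair complete k-partite graph on n vertices with k ≥ 3. Then the partition of V(G) into its k classes can be coarsened to a partition into exactly 3 nonempty classes, each of which is a union of original partition classes and contains at most n/2 vertices. Equivalently, G has a spanning subgraph, obtained by deleting all edges between certain original classes, which is a fair complete tripartite graph. -/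
open SimpleGraph Set

/- Of four distinct classes `a, b, c, d`, the lighter of the pairs `{a, b}` and `{c, d}` has at most
half of the total weight, so its two classes may be merged. Starting from a fair partition, this can
be repeated as long as at least four classes remain. -/

section ClassWeight

variable {V ι κ M : Type*} [Fintype V] [DecidableEq ι] [DecidableEq κ] [AddCommMonoid M]

/-- The total weight of the class `i` in the partition of `V` into the fibres of `f`. A partition is
encoded by such a labelling, so that coarsening it is composition with a map of labels. -/
def classWeight (w : V → M) (f : V → ι) (i : ι) : M :=
  ∑ v with f v = i, w v

lemma classWeight_nonneg [PartialOrder M] [IsOrderedAddMonoid M] {w : V → M} (hw : 0 ≤ w)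
    (f : V → ι) : 0 ≤ classWeight w f :=
  fun _ ↦ Finset.sum_nonneg fun v _ ↦ hw v

lemma sum_classWeight [Fintype ι] (w : V → M) (f : V → ι) :
    ∑ i, classWeight w f i = ∑ v, w v :=
  Finset.sum_fiberwise _ _ _

lemma classWeight_equiv_comp (w : V → M) (f : V → ι) (e : ι ≃ κ) (j : κ) :
    classWeight w (e ∘ f) j = classWeight w f (e.symm j) := by
  simp only [classWeight, Function.comp_apply, e.eq_symm_apply]

lemma classWeight_one (f : V → ι) (i : ι) :
    classWeight (1 : V → ℕ) f i = ({v | f v = i} : Set V).ncard := by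
  simp [classWeight, Set.ncard_eq_toFinset_card']

/-- Fairness of the partition of `V` into the fibres of `f`, for vertices weighted by `w`: no class
has more than half of the total weight. Classes may be empty. The factor `2` replaces a division. -/
def IsFair [LE M] (w : V → M) (f : V → ι) : Prop :=
  ∀ i, 2 • classWeight w f i ≤ ∑ v, w v

lemma isFair_one_iff {f : V → ι} :
    IsFair (1 : V → ℕ) f ↔ ∀ i, 2 * ({v | f v = i} : Set V).ncard ≤ Fintype.card V := by
  simp [IsFair, classWeight_one]

lemma IsFair.equiv_comp [LE M] {w : V → M} {f : V → ι} (hf : IsFair w f) (e : ι ≃ κ) :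
    IsFair w (e ∘ f) := fun j ↦ by
  rw [classWeight_equiv_comp]
  exact hf _

end ClassWeight

section MergeLabel

variable {V ι M : Type*} [DecidableEq ι] {a b : ι}

/-- The map of labels that merges class `b` into class `a`: it sends `b` to `a`, fixes all other
labels, and no longer has `b` among its values. -/
def mergeLabel (hab : a ≠ b) (i : ι) : {i // i ≠ b} :=
  if hi : i = b then ⟨a, hab⟩ else ⟨i, hi⟩

lemma mergeLabel_surjective (hab : a ≠ b) : Function.Surjective (mergeLabel hab) :=
  fun c ↦ ⟨c, dif_neg c.2⟩

lemma mergeLabel_eq_left_iff (hab : a ≠ b) {i : ι} :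
    mergeLabel hab i = ⟨a, hab⟩ ↔ i = a ∨ i = b := by
  grind [mergeLabel]

lemma mergeLabel_eq_iff_of_ne (hab : a ≠ b) {i : ι} {c : {i // i ≠ b}} (hc : (c : ι) ≠ a) :
    mergeLabel hab i = c ↔ i = c := by
  grind [mergeLabel]

variable [Fintype V] [AddCommMonoid M]

lemma classWeight_mergeLabel_comp_left (hab : a ≠ b) (w : V → M) (f : V → ι) :
    classWeight w (mergeLabel hab ∘ f) ⟨a, hab⟩ = classWeight w f a + classWeight w f b := by
  classical
  simp only [classWeight, Function.comp_apply, mergeLabel_eq_left_iff]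
  rw [Finset.filter_or, Finset.sum_union]
  exact Finset.disjoint_filter.2 fun _ _ hva hvb ↦ hab (hva.symm.trans hvb)

lemma classWeight_mergeLabel_comp_of_ne (hab : a ≠ b) (w : V → M) (f : V → ι)
    {c : {i // i ≠ b}} (hc : (c : ι) ≠ a) :
    classWeight w (mergeLabel hab ∘ f) c = classWeight w f c := by
  simp only [classWeight, Function.comp_apply, mergeLabel_eq_iff_of_ne hab hc]

lemma IsFair.mergeLabel_comp [LE M] {w : V → M} {f : V → ι} (hf : IsFair w f) (hab : a ≠ b)
    (hle : 2 • (classWeight w f a + classWeight w f b) ≤ ∑ v, w v) :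
    IsFair w (mergeLabel hab ∘ f) := by
  intro c
  by_cases hc : (c : ι) = a
  · obtain rfl : c = ⟨a, hab⟩ := Subtype.ext hc
    rwa [classWeight_mergeLabel_comp_left]
  · rw [classWeight_mergeLabel_comp_of_ne hab w f hc]
    exact hf c

end MergeLabel

section Coarsening

variable {V ι κ M : Type*} [Fintype ι] [AddCommMonoid M] [LinearOrder M] [IsOrderedAddMonoid M]

lemma exists_ne_two_nsmul_add_le_sum (hι : 4 ≤ Fintype.card ι) {u : ι → M} (hu : 0 ≤ u) :
    ∃ a b, a ≠ b ∧ 2 • (u a + u b) ≤ ∑ i, u i := by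
  obtain ⟨e⟩ : Nonempty (Fin 4 ↪ ι) :=
    Function.Embedding.nonempty_of_card_le (by rwa [Fintype.card_fin])
  have hsum : (u (e 0) + u (e 1)) + (u (e 2) + u (e 3)) ≤ ∑ i, u i := calc
    _ = ∑ i ∈ Finset.univ.map e, u i := by
      rw [Finset.sum_map, Fin.sum_univ_four, ← add_assoc]
    _ ≤ ∑ i, u i := Finset.sum_le_univ_sum_of_nonneg hu
  rcases le_total (u (e 0) + u (e 1)) (u (e 2) + u (e 3)) with h | h
  · refine ⟨e 0, e 1, e.injective.ne (by decide), le_trans ?_ hsum⟩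
    rw [two_nsmul]
    gcongr
  · refine ⟨e 2, e 3, e.injective.ne (by decide), le_trans ?_ hsum⟩
    rw [two_nsmul]
    gcongr

variable [Fintype V] [DecidableEq ι]

lemma IsFair.exists_mergeLabel_comp {w : V → M} {f : V → ι} (hf : IsFair w f) (hw : 0 ≤ w)
    (hι : 4 ≤ Fintype.card ι) :
    ∃ (a b : ι) (hab : a ≠ b), IsFair w (mergeLabel hab ∘ f) := by
  obtain ⟨a, b, hab, hle⟩ := exists_ne_two_nsmul_add_le_sum hι (classWeight_nonneg hw f)
  rw [sum_classWeight] at hle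
  exact ⟨a, b, hab, hf.mergeLabel_comp hab hle⟩

theorem stmt5_general [Fintype κ] [DecidableEq κ] (hκ : 3 ≤ Fintype.card κ)
    (hκι : Fintype.card κ ≤ Fintype.card ι) {w : V → M} (hw : 0 ≤ w) {f : V → ι}
    (hf : IsFair w f) : ∃ g : ι → κ, Function.Surjective g ∧ IsFair w (g ∘ f) := by
  obtain ⟨n, hn⟩ : ∃ n, Fintype.card ι = n := ⟨_, rfl⟩
  rw [hn] at hκι
  induction n, hκι using Nat.le_induction generalizing ι with
  | base =>
    let e := Fintype.equivOfCardEq hn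
    exact ⟨e, e.surjective, hf.equiv_comp e⟩
  | succ n hκn ih =>
    obtain ⟨a, b, hab, hmerge⟩ := hf.exists_mergeLabel_comp hw (by lia)
    have hcard : Fintype.card {i // i ≠ b} = n := by
      rw [Fintype.card_subtype_compl, Fintype.card_subtype_eq, hn, Nat.add_sub_cancel]
    obtain ⟨g, hg, hgfair⟩ := ih hmerge hcard
    exact ⟨g ∘ mergeLabel hab, hg.comp (mergeLabel_surjective hab), hgfair⟩

end Coarsening

/-- The partition of a fair complete `k`-partite graph (`k ≥ 3`) into its `k` classes can
be coarsened to a partition into exactly 3 nonempty classes (each a union of original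
classes) each containing at most half of the vertices. -/
theorem stmt5 {V : Type*} [Fintype V] (k : ℕ) (hk : 3 ≤ k)
    (f : V → Fin k) (hf : Function.Surjective f)
    (hfair : ∀ i : Fin k, 2 * ({v | f v = i} : Set V).ncard ≤ Fintype.card V) :
    ∃ g : Fin k → Fin 3, Function.Surjective (g ∘ f) ∧
      ∀ j : Fin 3, 2 * ({v | g (f v) = j} : Set V).ncard ≤ Fintype.card V := by
  obtain ⟨g, hg, hgfair⟩ := stmt5_general (κ := Fin 3) (by simp) (by simpa using hk)
    zero_le_one (isFair_one_iff.2 hfair)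
  exact ⟨g, hg.comp hf, isFair_one_iff.1 hgfair⟩
end

section
/- Let G be a complete tripartite graph with partition classes V₁, V₂, V₃ of sizes n₁, n₂, n₃, whose edges are coloured red and blue, and suppose n₁ = n₂ and n₃ = 1. Then there exist a red path R and a blue path B in G whose vertex sets intersect in exactly one vertex x, which is an endvertex of both R and B, and such that V(R) ∪ V(B) = V(G). -/
open SimpleGraph Set

/-!
Let `z` be the vertex of the singleton class, and `s`, `t` the other two classes. A depth-first
search for red edges between `s` and `t`, stopped when as many vertices are finished as are unseen,
leaves a red path `P` (the stack) with ends in different classes and, since no red edge joins a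
finished vertex to an unseen one, two balanced complete blue bicliques `S` and `T`. Each of them
has a blue Hamiltonian path.

A blue edge between opposite sides of `S` and `T` turns `S ∪ T` into a single blue path, which is
joined to `P` by an edge of either colour; `z` can then be inserted next to the common vertex.
Otherwise all edges between `S` and `T` are red. If `z` has blue neighbours in both `S` and `T`, it
links them into one blue path. If not, `z` is red to all of, say, `S`. Then a red path alternating
between `S` and `T` and passing through `z` absorbs one of the two bicliques, together with as many
vertices of the other, and what remains is a balanced blue biclique. If an end of `P` has a red
neighbour in `S` or `T`, then `P` can be attached to this path; otherwise that end of `P` is itself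
a blue link between `S` and `T`.
-/

section WalkSupport

variable {V : Type*} {g h : SimpleGraph V} {u v w x y : V} {M N : Multiset V}

/-- `M` is the multiset of vertices visited by some walk of `g` from `u` to `v`. When `M` has no
repeated element this walk is a path with vertex set `M`; keeping multisets lets vertex sets be
combined by `+` without disjointness side conditions. -/
def IsWalkSupport (g : SimpleGraph V) (u v : V) (M : Multiset V) : Prop :=
  ∃ p : g.Walk u v, (p.support : Multiset V) = M

namespace IsWalkSupport

lemma singleton (g : SimpleGraph V) (u : V) : IsWalkSupport g u u {u} :=
  ⟨.nil, rfl⟩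

lemma symm (hM : IsWalkSupport g u v M) : IsWalkSupport g v u M := by
  obtain ⟨p, rfl⟩ := hM
  exact ⟨p.reverse, by rw [Walk.support_reverse, Multiset.coe_reverse]⟩

lemma mono (hgh : g ≤ h) (hM : IsWalkSupport g u v M) : IsWalkSupport h u v M := by
  obtain ⟨p, rfl⟩ := hM
  exact ⟨p.mapLe hgh, by rw [Walk.support_mapLe_eq_support]⟩

lemma append (hM : IsWalkSupport g u v M) (hvw : g.Adj v w) (hN : IsWalkSupport g w x N) :
    IsWalkSupport g u x (M + N) := by
  obtain ⟨p, rfl⟩ := hM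
  obtain ⟨q, rfl⟩ := hN
  exact ⟨p.append (.cons hvw q), by
    rw [Walk.support_append, Walk.support_cons, List.tail_cons, Multiset.coe_add]⟩

lemma cons (huv : g.Adj u v) (hM : IsWalkSupport g v w M) : IsWalkSupport g u w ({u} + M) :=
  (singleton g u).append huv hM

lemma through (hM : IsWalkSupport g u v M) (hwu : g.Adj w u) (hN : IsWalkSupport g x y N)
    (hwx : g.Adj w x) : IsWalkSupport g v y ({w} + (M + N)) := by
  rw [add_left_comm]
  exact hM.symm.append hwu.symm (hN.cons hwx)

lemma eq_singleton_or_cons (hM : IsWalkSupport g u v M) :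
    (u = v ∧ M = {u}) ∨ ∃ w N, g.Adj u w ∧ IsWalkSupport g w v N ∧ M = {u} + N := by
  obtain ⟨p, rfl⟩ := hM
  cases p with
  | nil => exact .inl ⟨rfl, rfl⟩
  | cons huw q => exact .inr ⟨_, q.support, huw, ⟨q, rfl⟩, rfl⟩

lemma exists_eq_singleton_add (hM : IsWalkSupport g u v M) : ∃ N, M = {v} + N := by
  rcases hM.symm.eq_singleton_or_cons with ⟨-, rfl⟩ | ⟨_, N, -, -, rfl⟩
  · exact ⟨0, (add_zero _).symm⟩
  · exact ⟨N, rfl⟩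

lemma exists_monochromatic_path {G : SimpleGraph V} {c : Sym2 V → Bool} {i : Bool}
    (hM : IsWalkSupport (monoSubgraph G c i) u v M) (hnodup : M.Nodup) :
    ∃ p : G.Walk u v, p.IsPath ∧ (∀ e ∈ p.edges, c e = i) ∧ (p.support : Multiset V) = M := by
  obtain ⟨p, rfl⟩ := hM
  have hle : monoSubgraph G c i ≤ G := fun _ _ hadj ↦ hadj.1.1
  refine ⟨p.mapLe hle, (p.mapLe hle).isPath_def.2 ?_, fun e he ↦ ?_, ?_⟩
  · rwa [Walk.support_mapLe_eq_support]
  · rw [Walk.edges_mapLe_eq_edges] at he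
    have he' := p.edges_subset_edgeSet he
    rw [monoSubgraph, edgeSet_fromEdgeSet] at he'
    exact he'.1.2
  · rw [Walk.support_mapLe_eq_support]

lemma two_mul_countP_add {s t : Set V} [DecidablePred (· ∈ s)]
    (hg : g.IsBipartiteWith s t) (hM : IsWalkSupport g u v M) :
    2 * M.countP (· ∈ s) + (if u ∈ s then 0 else 1) + (if v ∈ s then 0 else 1) = M.card + 1 := by
  obtain ⟨p, rfl⟩ := hM
  induction p with
  | nil =>
    simp only [Walk.support_nil, ← Multiset.cons_coe, Multiset.coe_nil, Multiset.countP_cons,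
      Multiset.countP_zero, Multiset.card_cons, Multiset.card_zero]
    split_ifs <;> rfl
  | @cons u w v huw q ih =>
    have hsides : u ∈ s ↔ w ∉ s := by
      have hdisj : ∀ {a}, a ∈ s → a ∉ t := fun ha ↦ disjoint_left.1 hg.disjoint ha
      rcases hg.mem_of_adj huw with ⟨hu, hw⟩ | ⟨hu, hw⟩
      · exact iff_of_true hu fun hw' ↦ hdisj hw' hw
      · exact iff_of_false (fun hu' ↦ hdisj hu' hu) (not_not.2 hw)
    simp only [Walk.support_cons, ← Multiset.cons_coe, Multiset.countP_cons,
      Multiset.card_cons] at ih ⊢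
    split_ifs at ih ⊢ <;> first | omega | tauto

end IsWalkSupport

/-- A depth-first search state on `U`: the stack `P` is a walk or empty, `A` holds the finished
vertices and `B` the unseen ones, so that `g` has no edge between `A` and `B`. -/
structure IsSearchState (g : SimpleGraph V) (U P A B : Multiset V) : Prop where
  stack : P = 0 ∨ ∃ u v, IsWalkSupport g u v P
  not_adj : ∀ x ∈ A, ∀ y ∈ B, ¬ g.Adj x y
  sum_eq : P + (A + B) = U

namespace IsSearchState

variable {U P A B : Multiset V}

lemma push {y : V} (hS : IsSearchState g U P A (y ::ₘ B))
    (hy : ∃ u v, IsWalkSupport g u v ({y} + P)) : IsSearchState g U ({y} + P) A B where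
  stack := .inr hy
  not_adj x hx y hy := hS.not_adj x hx y (Multiset.mem_cons_of_mem hy)
  sum_eq := by
    rw [← hS.sum_eq, ← Multiset.singleton_add]
    abel

lemma pop (hS : IsSearchState g U P A B) (hP : IsWalkSupport g u v P)
    (hu : ∀ y ∈ B, ¬ g.Adj u y) : ∃ Q, IsSearchState g U Q (u ::ₘ A) B := by
  obtain ⟨Q, hQ, rfl⟩ : ∃ Q, (Q = 0 ∨ ∃ u v, IsWalkSupport g u v Q) ∧ P = {u} + Q := by
    rcases hP.eq_singleton_or_cons with ⟨-, rfl⟩ | ⟨w, Q, -, hQ, rfl⟩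
    · exact ⟨0, .inl rfl, (add_zero _).symm⟩
    · exact ⟨Q, .inr ⟨w, v, hQ⟩, rfl⟩
  refine ⟨Q, hQ, Multiset.forall_mem_cons.2 ⟨hu, hS.not_adj⟩, ?_⟩
  rw [← hS.sum_eq, ← Multiset.singleton_add]
  abel

lemma exists_step (hS : IsSearchState g U P A B) (hB : B ≠ 0) :
    ∃ P' A' B', IsSearchState g U P' A' B' ∧ B'.card + A.card + 1 = A'.card + B.card := by
  have can_push : ∀ y ∈ B, (∃ u v, IsWalkSupport g u v ({y} + P)) → ∃ P' A' B',
      IsSearchState g U P' A' B' ∧ B'.card + A.card + 1 = A'.card + B.card := by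
    intro y hy hyP
    obtain ⟨B, rfl⟩ := Multiset.exists_cons_of_mem hy
    exact ⟨_, A, B, hS.push hyP, by rw [Multiset.card_cons]; omega⟩
  rcases hS.stack with rfl | ⟨u, v, hP⟩
  · obtain ⟨y, hy⟩ := Multiset.exists_mem_of_ne_zero hB
    exact can_push y hy ⟨y, y, .singleton g y⟩
  by_cases hu : ∃ y ∈ B, g.Adj y u
  · obtain ⟨y, hy, hyu⟩ := hu
    exact can_push y hy ⟨y, v, hP.cons hyu⟩
  · obtain ⟨Q, hQ⟩ := hS.pop hP fun y hy huy ↦ hu ⟨y, hy, huy.symm⟩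
    exact ⟨Q, _, B, hQ, by rw [Multiset.card_cons]; omega⟩

/-- Each step lowers `B.card - A.card` by exactly one, so the search passes through a state where
the two sets have the same size. -/
lemma exists_card_eq (g : SimpleGraph V) (U : Multiset V) :
    ∃ P A B, IsSearchState g U P A B ∧ A.card = B.card := by
  suffices key : ∀ d P A B, IsSearchState g U P A B → B.card = A.card + d →
      ∃ P' A' B', IsSearchState g U P' A' B' ∧ A'.card = B'.card from
    key U.card 0 0 U ⟨.inl rfl, by simp, by simp⟩ (by simp)
  intro d
  induction d with
  | zero => exact fun P A B hS hcard ↦ ⟨P, A, B, hS, hcard.symm⟩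
  | succ d ih =>
    intro P A B hS hcard
    obtain ⟨P', A', B', hS', hcard'⟩ :=
      hS.exists_step (Multiset.card_pos.1 (by omega))
    exact ih P' A' B' hS' (by omega)

end IsSearchState

end WalkSupport

section RedBlueSupport

variable {V : Type*} {r b : SimpleGraph V} {u v w x z : V} {M N : Multiset V}

/-- `M` is the vertex multiset of a walk of the red graph `r` and a walk of the blue graph `b` that
end at a common vertex `x`, which is counted only once. The two graphs may share edges. -/
def IsRedBlueSupport (r b : SimpleGraph V) (M : Multiset V) : Prop :=
  ∃ x u v R B, IsWalkSupport r u x R ∧ IsWalkSupport b v x B ∧ R + B = {x} + M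

lemma IsWalkSupport.isRedBlueSupport (hM : IsWalkSupport r u v M) (b : SimpleGraph V) :
    IsRedBlueSupport r b M :=
  ⟨v, u, v, M, {v}, hM, .singleton b v, add_comm _ _⟩

namespace IsRedBlueSupport

lemma swap (hM : IsRedBlueSupport r b M) : IsRedBlueSupport b r M := by
  obtain ⟨x, u, v, R, B, hR, hB, hRB⟩ := hM
  exact ⟨x, v, u, B, R, hB, hR, (add_comm B R).trans hRB⟩

lemma join (hM : IsWalkSupport r u v M) (hvw : (r ⊔ b).Adj v w) (hN : IsWalkSupport b w x N) :
    IsRedBlueSupport r b (M + N) := by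
  rcases hvw with hred | hblue
  · exact ⟨w, u, x, M + {w}, N, hM.append hred (.singleton r w), hN.symm, by abel⟩
  · exact ⟨v, u, x, M, {v} + N, hM, (hN.cons hblue).symm, by abel⟩

/-- The red walk is prolonged to `z`, which sees the vertex preceding `x` on the blue walk. -/
lemma insert_of_red_adj {R B : Multiset V} (hR : IsWalkSupport r u x R)
    (hB : IsWalkSupport b v x B) (hRB : R + B = {x} + M) (hzx : r.Adj z x)
    (hz : ∀ y ∈ M, (r ⊔ b).Adj z y) : IsRedBlueSupport r b ({z} + M) := by
  have hzR : IsWalkSupport r u z (R + {z}) := hR.append hzx.symm (.singleton r z)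
  rcases hB.symm.eq_singleton_or_cons with ⟨-, rfl⟩ | ⟨y, N, -, hN, rfl⟩
  · obtain rfl : R = M := add_left_cancel ((add_comm {x} R).trans hRB)
    exact (add_comm R {z}) ▸ hzR.isRedBlueSupport b
  · obtain rfl : R + N = M := add_left_cancel ((add_left_comm {x} R N).trans hRB)
    obtain ⟨N', rfl⟩ := hN.symm.exists_eq_singleton_add
    convert join hzR (hz y (by simp)) hN using 1
    abel

lemma insert (hM : IsRedBlueSupport r b M) (hz : ∀ y ∈ M, (r ⊔ b).Adj z y) :
    IsRedBlueSupport r b ({z} + M) := by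
  obtain ⟨x, u, v, R, B, hR, hB, hRB⟩ := hM
  have hx : x ∈ M := by
    obtain ⟨R, rfl⟩ := hR.exists_eq_singleton_add
    obtain ⟨B, rfl⟩ := hB.exists_eq_singleton_add
    rw [add_assoc, add_right_inj] at hRB
    simp [← hRB]
  rcases hz x hx with hred | hblue
  · exact insert_of_red_adj hR hB hRB hred hz
  · rw [add_comm] at hRB
    exact (insert_of_red_adj hB hR hRB hblue fun y hy ↦ Or.symm (hz y hy)).swap

end IsRedBlueSupport

end RedBlueSupport

section BalancedBiclique

variable {V : Type*} {g r b : SimpleGraph V} {s t : Set V} {u v x y z : V}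
  {X Y S₁ S₂ T₁ T₂ M : Multiset V}

/-- `M` is empty or the multiset of vertices visited by some walk of `g` from `s` to `t`.
When `s` and `t` are completely joined, every vertex of `s ∪ t` sees one of its ends. -/
def IsCrossingSupport (g : SimpleGraph V) (s t : Set V) (M : Multiset V) : Prop :=
  M = 0 ∨ ∃ x ∈ s, ∃ y ∈ t, IsWalkSupport g x y M

/-- `X` and `Y` are the sides, contained in `s` and `t` and of equal size, of a complete bipartite
subgraph of `g`. -/
structure IsBalancedBiclique (g : SimpleGraph V) (s t : Set V) (X Y : Multiset V) : Prop where
  left_mem : ∀ x ∈ X, x ∈ s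
  right_mem : ∀ y ∈ Y, y ∈ t
  card_eq : X.card = Y.card
  adj : ∀ x ∈ X, ∀ y ∈ Y, g.Adj x y

namespace IsBalancedBiclique

lemma symm (h : IsBalancedBiclique g s t X Y) : IsBalancedBiclique g t s Y X :=
  ⟨h.right_mem, h.left_mem, h.card_eq.symm, fun y hy x hx ↦ (h.adj x hx y hy).symm⟩

lemma of_cons (h : IsBalancedBiclique g s t (x ::ₘ X) (y ::ₘ Y)) :
    IsBalancedBiclique g s t X Y where
  left_mem a ha := h.left_mem a (Multiset.mem_cons_of_mem ha)
  right_mem c hc := h.right_mem c (Multiset.mem_cons_of_mem hc)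
  card_eq := by simpa using h.card_eq
  adj a ha c hc := h.adj a (Multiset.mem_cons_of_mem ha) c (Multiset.mem_cons_of_mem hc)

lemma exists_eq_cons_of_mem (h : IsBalancedBiclique g s t X Y) (hx : x ∈ X) :
    ∃ X' y Y', X = x ::ₘ X' ∧ Y = y ::ₘ Y' := by
  obtain ⟨y, hy⟩ := Multiset.card_pos_iff_exists_mem.1
    (h.card_eq ▸ Multiset.card_pos_iff_exists_mem.2 ⟨x, hx⟩)
  obtain ⟨X', hX⟩ := Multiset.exists_cons_of_mem hx
  obtain ⟨Y', hY⟩ := Multiset.exists_cons_of_mem hy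
  exact ⟨X', y, Y', hX, hY⟩

lemma eq_zero_or_eq_cons (h : IsBalancedBiclique g s t X Y) :
    (X = 0 ∧ Y = 0) ∨ ∃ x X' y Y', X = x ::ₘ X' ∧ Y = y ::ₘ Y' := by
  rcases X.empty_or_exists_mem with rfl | ⟨x, hx⟩
  · exact .inl ⟨rfl, Multiset.card_eq_zero.1 h.card_eq.symm⟩
  · exact .inr ⟨x, h.exists_eq_cons_of_mem hx⟩

lemma isWalkSupport (h : IsBalancedBiclique g s t X Y) (hx : x ∈ X) (hy : y ∈ Y) :
    IsWalkSupport g x y (X + Y) := by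
  obtain ⟨X, rfl⟩ := Multiset.exists_cons_of_mem hx
  obtain ⟨Y, rfl⟩ := Multiset.exists_cons_of_mem hy
  induction X using Multiset.induction generalizing x y Y with
  | empty =>
    obtain rfl : Y = 0 := by simpa using h.of_cons.card_eq.symm
    exact (IsWalkSupport.singleton g y).cons (h.adj x hx y hy)
  | cons x' X ih =>
    obtain ⟨_, y', Y, -, rfl⟩ := h.of_cons.exists_eq_cons_of_mem (Multiset.mem_cons_self x' X)
    have inner : IsWalkSupport g y' x' (x' ::ₘ X + y' ::ₘ Y) :=
      (ih (by simp) Y (by simp) h.of_cons).symm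
    have outer := (inner.append (h.adj x' (by simp) y (by simp)) (.singleton g y)).cons
      (h.adj x (by simp) y' (by simp))
    convert outer using 1
    simp only [← Multiset.singleton_add]
    abel

lemma exists_isWalkSupport (h : IsBalancedBiclique g s t X Y) (hx : x ∈ X) :
    ∃ y ∈ t, IsWalkSupport g x y (X + Y) := by
  obtain ⟨X, y, Y, rfl, rfl⟩ := h.exists_eq_cons_of_mem hx
  exact ⟨y, h.right_mem y (by simp), h.isWalkSupport hx (by simp)⟩

lemma exists_isWalkSupport_of_mem_add (h : IsBalancedBiclique g s t X Y) (hx : x ∈ X + Y) :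
    ∃ y ∈ s ∪ t, IsWalkSupport g x y (X + Y) := by
  rcases Multiset.mem_add.1 hx with hx | hx
  · obtain ⟨y, hy, hxy⟩ := h.exists_isWalkSupport hx
    exact ⟨y, .inr hy, hxy⟩
  · obtain ⟨y, hy, hxy⟩ := h.symm.exists_isWalkSupport hx
    exact ⟨y, .inl hy, add_comm Y X ▸ hxy⟩

lemma isCrossingSupport (h : IsBalancedBiclique g s t X Y) : IsCrossingSupport g s t (X + Y) := by
  rcases h.eq_zero_or_eq_cons with ⟨rfl, rfl⟩ | ⟨x, X, y, Y, rfl, rfl⟩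
  · exact .inl rfl
  · exact .inr ⟨x, h.left_mem x (by simp), y, h.right_mem y (by simp),
      h.isWalkSupport (by simp) (by simp)⟩

lemma isCrossingSupport_add (hS : IsBalancedBiclique g s t S₁ S₂)
    (hT : IsBalancedBiclique g s t T₁ T₂) (hx : x ∈ S₁) (hy : y ∈ T₂) (hxy : g.Adj x y) :
    IsCrossingSupport g s t ((S₁ + S₂) + (T₁ + T₂)) := by
  obtain ⟨x', hx', hxx'⟩ := hS.exists_isWalkSupport hx
  obtain ⟨y', hy', hyy'⟩ := hT.symm.exists_isWalkSupport hy
  rw [add_comm T₁]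
  exact .inr ⟨y', hy', x', hx', (hxx'.symm.append hxy hyy').symm⟩

lemma isRedBlueSupport_add (h : IsBalancedBiclique b s t X Y) (hM : IsWalkSupport r u v M)
    (hv : ∀ x ∈ X, (r ⊔ b).Adj v x) : IsRedBlueSupport r b (M + (X + Y)) := by
  rcases h.eq_zero_or_eq_cons with ⟨rfl, rfl⟩ | ⟨x, X, y, Y, rfl, rfl⟩
  · simpa using hM.isRedBlueSupport b
  · exact .join hM (hv x (by simp)) (h.isWalkSupport (y := y) (by simp) (by simp))

end IsBalancedBiclique

namespace IsCrossingSupport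

variable {P N : Multiset V}

lemma isRedBlueSupport_add (hst : (r ⊔ b).IsCompleteBetween s t) (hP : IsCrossingSupport r s t P)
    (hu : u ∈ s ∪ t) (hN : IsWalkSupport b u v N) : IsRedBlueSupport r b (P + N) := by
  rcases hP with rfl | ⟨p, hp, q, hq, hP⟩
  · simpa using (hN.isRedBlueSupport r).swap
  · rcases hu with hu | hu
    · exact .join hP (hst hu hq).symm hN
    · exact .join hP.symm (hst hp hu) hN

lemma isRedBlueSupport_singleton_add (hst : (r ⊔ b).IsCompleteBetween s t)
    (hP : IsCrossingSupport r s t P) (hN : IsCrossingSupport b s t N)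
    (hz : ∀ y ∈ P + N, (r ⊔ b).Adj z y) : IsRedBlueSupport r b ({z} + (P + N)) := by
  rcases hN with rfl | ⟨u, hu, v, -, hN⟩
  · rw [add_zero] at hz ⊢
    rcases hP with rfl | ⟨p, -, q, -, hP⟩
    · exact (IsWalkSupport.singleton r z).isRedBlueSupport b
    · exact (hP.isRedBlueSupport b).insert hz
  · exact (hP.isRedBlueSupport_add hst (.inl hu) hN).insert hz

end IsCrossingSupport

end BalancedBiclique

section Split

variable {V : Type*} {r b : SimpleGraph V} {s t : Set V} {p q x₁ x₂ y₁ y₂ z : V}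
  {S₁ S₂ T₁ T₂ P : Multiset V}

/-- A pair of balanced blue bicliques, with sides `S₁`, `S₂` and `T₁`, `T₂`, between which all edges
from `s` to `t` are red. In the notation of `IsSplitColouring`, the sets `A`, `C`, `B`, `D` are
`S₁`, `S₂`, `T₁`, `T₂`. -/
structure IsSplitPair (r b : SimpleGraph V) (s t : Set V) (S₁ S₂ T₁ T₂ : Multiset V) : Prop where
  fst : IsBalancedBiclique b s t S₁ S₂
  snd : IsBalancedBiclique b s t T₁ T₂
  adj_fst_snd : ∀ x ∈ S₁, ∀ y ∈ T₂, r.Adj x y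
  adj_snd_fst : ∀ x ∈ T₁, ∀ y ∈ S₂, r.Adj x y

lemma IsBalancedBiclique.isCrossingSupport_or_isSplitPair
    (hst : (r ⊔ b).IsCompleteBetween s t) (hS : IsBalancedBiclique b s t S₁ S₂)
    (hT : IsBalancedBiclique b s t T₁ T₂) :
    IsCrossingSupport b s t ((S₁ + S₂) + (T₁ + T₂)) ∨
      IsSplitPair r b s t S₁ S₂ T₁ T₂ ∧ S₁ ≠ 0 ∧ T₁ ≠ 0 := by
  by_contra! ⟨hcross, hsplit⟩
  have red_fst_snd : ∀ x ∈ S₁, ∀ y ∈ T₂, r.Adj x y := fun x hx y hy ↦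
    (hst (hS.left_mem x hx) (hT.right_mem y hy)).resolve_right fun hxy ↦
      hcross (hS.isCrossingSupport_add hT hx hy hxy)
  have red_snd_fst : ∀ x ∈ T₁, ∀ y ∈ S₂, r.Adj x y := fun x hx y hy ↦
    (hst (hT.left_mem x hx) (hS.right_mem y hy)).resolve_right fun hxy ↦
      hcross (add_comm (T₁ + T₂) _ ▸ hT.isCrossingSupport_add hS hx hy hxy)
  have hS₁ : S₁ ≠ 0 := by
    rintro rfl
    obtain rfl : S₂ = 0 := Multiset.card_eq_zero.1 hS.card_eq.symm
    exact hcross (by simpa using hT.isCrossingSupport)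
  obtain rfl : T₁ = 0 := hsplit ⟨hS, hT, red_fst_snd, red_snd_fst⟩ hS₁
  obtain rfl : T₂ = 0 := Multiset.card_eq_zero.1 hT.card_eq.symm
  exact hcross (by simpa using hS.isCrossingSupport)

namespace IsSplitPair

lemma swap (h : IsSplitPair r b s t S₁ S₂ T₁ T₂) : IsSplitPair r b s t T₁ T₂ S₁ S₂ :=
  ⟨h.snd, h.fst, h.adj_snd_fst, h.adj_fst_snd⟩

lemma of_cons_fst (h : IsSplitPair r b s t (x₁ ::ₘ S₁) (x₂ ::ₘ S₂) T₁ T₂) :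
    IsSplitPair r b s t S₁ S₂ T₁ T₂ where
  fst := h.fst.of_cons
  snd := h.snd
  adj_fst_snd x hx := h.adj_fst_snd x (Multiset.mem_cons_of_mem hx)
  adj_snd_fst x hx y hy := h.adj_snd_fst x hx y (Multiset.mem_cons_of_mem hy)

lemma of_cons_snd (h : IsSplitPair r b s t S₁ S₂ (y₁ ::ₘ T₁) (y₂ ::ₘ T₂)) :
    IsSplitPair r b s t S₁ S₂ T₁ T₂ :=
  h.swap.of_cons_fst.swap

lemma adj_of_mem_left {x e : V} (h : IsSplitPair r b s t S₁ S₂ T₁ T₂)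
    (hz : ∀ x ∈ S₁ + S₂, r.Adj z x) (hx : x ∈ S₁) (he : e = z ∨ e ∈ T₂) : r.Adj x e := by
  rcases he with rfl | he
  · exact (hz x (Multiset.mem_add.2 (.inl hx))).symm
  · exact h.adj_fst_snd x hx e he

lemma adj_of_mem_right {x e : V} (h : IsSplitPair r b s t S₁ S₂ T₁ T₂)
    (hz : ∀ x ∈ S₁ + S₂, r.Adj z x) (hx : x ∈ S₂) (he : e = z ∨ e ∈ T₁) : r.Adj x e := by
  rcases he with rfl | he
  · exact (hz x (Multiset.mem_add.2 (.inr hx))).symm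
  · exact (h.adj_snd_fst e he x hx).symm

/-- The red walk grows around `z` by going round `y₂ x₁ … x₂ y₁` with `x₁ ∈ S₁`, `x₂ ∈ S₂`,
`y₁ ∈ T₁`, `y₂ ∈ T₂`, until one of the two bicliques is used up. -/
lemma exists_absorbing_walk (h : IsSplitPair r b s t S₁ S₂ T₁ T₂)
    (hz : ∀ x ∈ S₁ + S₂, r.Adj z x) :
    ∃ e₁ e₂ W L₁ L₂, (e₁ = z ∨ e₁ ∈ T₂) ∧ (e₂ = z ∨ e₂ ∈ T₁) ∧ IsWalkSupport r e₁ e₂ ({z} + W) ∧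
      IsBalancedBiclique b s t L₁ L₂ ∧ W + (L₁ + L₂) = (S₁ + S₂) + (T₁ + T₂) := by
  induction S₁ using Multiset.induction generalizing S₂ T₁ T₂ with
  | empty =>
    obtain rfl : S₂ = 0 := Multiset.card_eq_zero.1 h.fst.card_eq.symm
    exact ⟨z, z, 0, T₁, T₂, .inl rfl, .inl rfl, .singleton r z, h.snd, by simp⟩
  | cons x₁ S₁ ih =>
    rcases h.snd.eq_zero_or_eq_cons with ⟨rfl, rfl⟩ | ⟨y₁, T₁, y₂, T₂, rfl, rfl⟩
    · exact ⟨z, z, 0, _, S₂, .inl rfl, .inl rfl, .singleton r z, h.fst, by simp⟩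
    obtain ⟨_, x₂, S₂, -, rfl⟩ := h.fst.exists_eq_cons_of_mem (Multiset.mem_cons_self x₁ S₁)
    obtain ⟨e₁, e₂, W, L₁, L₂, he₁, he₂, hW, hL, hWL⟩ :=
      ih h.of_cons_fst.of_cons_snd fun x hx ↦ hz x (by grind)
    have hx₁ : r.Adj x₁ e₁ := h.adj_of_mem_left hz (by simp) (by grind)
    have hx₂ : r.Adj x₂ e₂ := h.adj_of_mem_right hz (by simp) (by grind)
    have hx₂y₁ : IsWalkSupport r x₂ y₁ ({x₂} + {y₁}) :=
      (IsWalkSupport.singleton r y₁).cons (h.adj_snd_fst y₁ (by simp) x₂ (by simp)).symm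
    have hy₂y₁ : IsWalkSupport r y₂ y₁ ({z} + ({y₂} + {x₁} + {x₂} + {y₁} + W)) := by
      convert ((hW.append hx₂.symm hx₂y₁).cons hx₁).cons
        (h.adj_fst_snd x₁ (by simp) y₂ (by simp)).symm using 1
      abel
    refine ⟨y₂, y₁, _, L₁, L₂, .inr (by simp), .inr (by simp), hy₂y₁, hL, ?_⟩
    rw [add_assoc, hWL]
    simp only [← Multiset.singleton_add]
    abel

lemma isRedBlueSupport_singleton_add (h : IsSplitPair r b s t S₁ S₂ T₁ T₂)
    (hst : (r ⊔ b).IsCompleteBetween s t) (hz : ∀ y ∈ (S₁ + S₂) + (T₁ + T₂), (r ⊔ b).Adj z y)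
    (hzS : ∀ x ∈ S₁ + S₂, r.Adj z x) :
    IsRedBlueSupport r b ({z} + ((S₁ + S₂) + (T₁ + T₂))) := by
  obtain ⟨e₁, e₂, W, L₁, L₂, -, he₂, hW, hL, hWL⟩ := h.exists_absorbing_walk hzS
  have he₂L₂ : ∀ y ∈ L₂, (r ⊔ b).Adj e₂ y := by
    rcases he₂ with rfl | he₂
    · exact fun y hy ↦ hz y (hWL ▸ by simp [hy])
    · exact fun y hy ↦ hst (h.snd.left_mem e₂ he₂) (hL.right_mem y hy)
  rw [← hWL, ← add_assoc, add_comm L₁]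
  exact hL.symm.isRedBlueSupport_add hW he₂L₂

lemma isRedBlueSupport_of_adj_fst (h : IsSplitPair r b s t S₁ S₂ T₁ T₂)
    (hst : (r ⊔ b).IsCompleteBetween s t) (hz : ∀ x ∈ S₁ + S₂, r.Adj z x)
    (hP : IsWalkSupport r p q P) (hx₁ : x₁ ∈ S₁) (hqx₁ : r.Adj q x₁) :
    IsRedBlueSupport r b ({z} + (P + ((S₁ + S₂) + (T₁ + T₂)))) := by
  obtain ⟨S₁, x₂, S₂, rfl, rfl⟩ := h.fst.exists_eq_cons_of_mem hx₁
  obtain ⟨e₁, e₂, W, L₁, L₂, he₁, he₂, hW, hL, hWL⟩ :=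
    h.of_cons_fst.exists_absorbing_walk fun x hx ↦ hz x (by grind)
  have hx₁e₁ : r.Adj x₁ e₁ := h.adj_of_mem_left hz (by simp) he₁
  have hx₂e₂ : r.Adj x₂ e₂ := h.adj_of_mem_right hz (by simp) he₂
  have walk : IsWalkSupport r p x₂ (P + ({x₁} + (({z} + W) + {x₂}))) :=
    hP.append hqx₁ ((hW.append hx₂e₂.symm (.singleton r x₂)).cons hx₁e₁)
  convert hL.isRedBlueSupport_add walk
    (fun x hx ↦ (hst (hL.left_mem x hx) (h.fst.right_mem x₂ (by simp))).symm) using 1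
  calc _ = P + {x₁} + {x₂} + {z} + ((S₁ + S₂) + (T₁ + T₂)) := by
        simp only [← Multiset.singleton_add]
        abel
    _ = _ := by
        rw [← hWL]
        abel

lemma isRedBlueSupport_of_adj_snd (h : IsSplitPair r b s t S₁ S₂ T₁ T₂)
    (hst : (r ⊔ b).IsCompleteBetween s t) (hz : ∀ x ∈ S₁ + S₂, r.Adj z x) (hS₁ : S₁ ≠ 0)
    (hP : IsWalkSupport r p q P) (hy₁ : y₁ ∈ T₁) (hqy₁ : r.Adj q y₁) :
    IsRedBlueSupport r b ({z} + (P + ((S₁ + S₂) + (T₁ + T₂)))) := by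
  obtain ⟨x₁, hx₁⟩ := Multiset.exists_mem_of_ne_zero hS₁
  obtain ⟨S₁, x₂, S₂, rfl, rfl⟩ := h.fst.exists_eq_cons_of_mem hx₁
  obtain ⟨T₁, y₂, T₂, rfl, rfl⟩ := h.snd.exists_eq_cons_of_mem hy₁
  obtain ⟨e₁, e₂, W, L₁, L₂, he₁, he₂, hW, hL, hWL⟩ :=
    h.of_cons_fst.of_cons_snd.exists_absorbing_walk fun x hx ↦ hz x (by grind)
  have hx₁e₁ : r.Adj x₁ e₁ := h.adj_of_mem_left hz (by simp) (by grind)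
  have hx₂e₂ : r.Adj x₂ e₂ := h.adj_of_mem_right hz (by simp) (by grind)
  have hx₁y₂ : r.Adj x₁ y₂ := h.adj_fst_snd x₁ (by simp) y₂ (by simp)
  have hy₁x₂ : r.Adj y₁ x₂ := h.adj_snd_fst y₁ (by simp) x₂ (by simp)
  have walk : IsWalkSupport r p y₂ (P + ({y₁} + ({x₂} + (({z} + W) + ({x₁} + {y₂}))))) :=
    hP.append hqy₁ (((hW.symm.append hx₁e₁.symm ((IsWalkSupport.singleton r y₂).cons hx₁y₂)).cons
      hx₂e₂).cons hy₁x₂)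
  convert hL.isRedBlueSupport_add walk
    (fun x hx ↦ (hst (hL.left_mem x hx) (h.snd.right_mem y₂ (by simp))).symm) using 1
  calc _ = P + {x₁} + {x₂} + {y₁} + {y₂} + {z} + ((S₁ + S₂) + (T₁ + T₂)) := by
        simp only [← Multiset.singleton_add]
        abel
    _ = _ := by
        rw [← hWL]
        abel

lemma isRedBlueSupport_of_blue_link (h : IsSplitPair r b s t S₁ S₂ T₁ T₂)
    (hst : (r ⊔ b).IsCompleteBetween s t) (hP : IsWalkSupport r p q P) (hp : p ∈ s) (hq : q ∈ t)
    (hx₁ : x₁ ∈ S₁) (hqx₁ : b.Adj q x₁) (hy₁ : y₁ ∈ T₁) (hqy₁ : b.Adj q y₁) :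
    IsRedBlueSupport r b (P + ((S₁ + S₂) + (T₁ + T₂))) := by
  obtain ⟨u, hu, hux⟩ := h.fst.exists_isWalkSupport hx₁
  obtain ⟨v, -, hvy⟩ := h.snd.exists_isWalkSupport hy₁
  have blue : IsWalkSupport b u v ({q} + ((S₁ + S₂) + (T₁ + T₂))) := hux.through hqx₁ hvy hqy₁
  rcases hP.symm.eq_singleton_or_cons with ⟨rfl, -⟩ | ⟨_, P, -, hP', rfl⟩
  · exact absurd hq (disjoint_left.1 hst.disjoint hp)
  · convert IsRedBlueSupport.join hP' (hst hp hu) blue using 1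
    abel

lemma isRedBlueSupport_of_red_adj (h : IsSplitPair r b s t S₁ S₂ T₁ T₂) (hS₁ : S₁ ≠ 0)
    (hT₁ : T₁ ≠ 0) (hst : (r ⊔ b).IsCompleteBetween s t) (hP : IsCrossingSupport r s t P)
    (hz : ∀ y ∈ P + ((S₁ + S₂) + (T₁ + T₂)), (r ⊔ b).Adj z y)
    (hzS : ∀ x ∈ S₁ + S₂, r.Adj z x) :
    IsRedBlueSupport r b ({z} + (P + ((S₁ + S₂) + (T₁ + T₂)))) := by
  rcases hP with rfl | ⟨p, hp, q, hq, hP⟩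
  · exact by simpa using h.isRedBlueSupport_singleton_add hst (by simpa using hz) hzS
  by_cases hqS : ∃ x₁ ∈ S₁, r.Adj q x₁
  · obtain ⟨x₁, hx₁, hqx₁⟩ := hqS
    exact h.isRedBlueSupport_of_adj_fst hst hzS hP hx₁ hqx₁
  by_cases hqT : ∃ y₁ ∈ T₁, r.Adj q y₁
  · obtain ⟨y₁, hy₁, hqy₁⟩ := hqT
    exact h.isRedBlueSupport_of_adj_snd hst hzS hS₁ hP hy₁ hqy₁
  obtain ⟨x₁, hx₁⟩ := Multiset.exists_mem_of_ne_zero hS₁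
  obtain ⟨y₁, hy₁⟩ := Multiset.exists_mem_of_ne_zero hT₁
  have hqx₁ : b.Adj q x₁ :=
    (hst (h.fst.left_mem x₁ hx₁) hq).symm.resolve_left fun hred ↦ hqS ⟨x₁, hx₁, hred⟩
  have hqy₁ : b.Adj q y₁ :=
    (hst (h.snd.left_mem y₁ hy₁) hq).symm.resolve_left fun hred ↦ hqT ⟨y₁, hy₁, hred⟩
  exact (h.isRedBlueSupport_of_blue_link hst hP hp hq hx₁ hqx₁ hy₁ hqy₁).insert hz

lemma isRedBlueSupport (h : IsSplitPair r b s t S₁ S₂ T₁ T₂) (hS₁ : S₁ ≠ 0)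
    (hT₁ : T₁ ≠ 0) (hst : (r ⊔ b).IsCompleteBetween s t) (hP : IsCrossingSupport r s t P)
    (hz : ∀ y ∈ P + ((S₁ + S₂) + (T₁ + T₂)), (r ⊔ b).Adj z y) :
    IsRedBlueSupport r b ({z} + (P + ((S₁ + S₂) + (T₁ + T₂)))) := by
  by_cases hzS : ∀ x ∈ S₁ + S₂, r.Adj z x
  · exact h.isRedBlueSupport_of_red_adj hS₁ hT₁ hst hP hz hzS
  by_cases hzT : ∀ y ∈ T₁ + T₂, r.Adj z y
  · rw [add_comm (S₁ + S₂)] at hz ⊢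
    exact h.swap.isRedBlueSupport_of_red_adj hT₁ hS₁ hst hP hz hzT
  push Not at hzS hzT
  obtain ⟨x, hx, hzx⟩ := hzS
  obtain ⟨y, hy, hzy⟩ := hzT
  have hzx : b.Adj z x := (hz x (by grind)).resolve_left hzx
  have hzy : b.Adj z y := (hz y (by grind)).resolve_left hzy
  obtain ⟨u, hu, hux⟩ := h.fst.exists_isWalkSupport_of_mem_add hx
  obtain ⟨v, -, hvy⟩ := h.snd.exists_isWalkSupport_of_mem_add hy
  rw [add_left_comm]
  exact hP.isRedBlueSupport_add hst hu (hux.through hzx hvy hzy)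

end IsSplitPair

end Split

section Partition

variable {V : Type*} {r b g : SimpleGraph V} {u v z : V}

lemma IsWalkSupport.isCrossingSupport_of_even_card {s t : Set V} [DecidablePred (· ∈ s)]
    {P : Multiset V} (hg : g.IsBipartiteWith s t) (hP : IsWalkSupport g u v P)
    (hst : ∀ x ∈ P, x ∈ s ∪ t)
    (heven : Even P.card) : IsCrossingSupport g s t P ∧ 2 * P.countP (· ∈ s) = P.card := by
  have hcount := hP.two_mul_countP_add hg
  have hu : u ∈ s ∪ t := hst u <| by
    obtain ⟨N, rfl⟩ := hP.symm.exists_eq_singleton_add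
    simp
  have hv : v ∈ s ∪ t := hst v <| by
    obtain ⟨N, rfl⟩ := hP.exists_eq_singleton_add
    simp
  obtain ⟨k, hk⟩ := heven
  by_cases hus : u ∈ s <;> by_cases hvs : v ∈ s <;>
    simp only [hus, hvs, if_true, if_false] at hcount
  · omega
  · exact ⟨.inr ⟨u, hus, v, hv.resolve_left hvs, hP⟩, by omega⟩
  · exact ⟨.inr ⟨v, hvs, u, hu.resolve_left hus, hP.symm⟩, by omega⟩
  · omega

lemma IsCrossingSupport.mono {h : SimpleGraph V} {s t : Set V} {P : Multiset V} (hgh : g ≤ h)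
    (hP : IsCrossingSupport g s t P) : IsCrossingSupport h s t P :=
  hP.imp_right fun ⟨x, hx, y, hy, hxy⟩ ↦ ⟨x, hx, y, hy, hxy.mono hgh⟩

lemma isBalancedBiclique_filter {s t : Set V} [DecidablePred (· ∈ s)] {A B : Multiset V}
    (hst : (r ⊔ b).IsCompleteBetween s t) (hB : ∀ y ∈ B, y ∈ s ∪ t)
    (hAB : ∀ x ∈ A, ∀ y ∈ B, ¬ (r.between s t).Adj x y)
    (hcard : A.countP (· ∈ s) + B.countP (· ∈ s) = B.card) :
    IsBalancedBiclique b s t (A.filter (· ∈ s)) (B.filter (· ∉ s)) := by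
  have hBt : ∀ y ∈ B.filter (· ∉ s), y ∈ t := fun y hy ↦
    (hB y (Multiset.mem_of_mem_filter hy)).resolve_left (Multiset.of_mem_filter (p := (· ∉ s)) hy)
  refine ⟨fun x ↦ Multiset.of_mem_filter, hBt, ?_, fun x hx y hy ↦ ?_⟩
  · have hsplit := congrArg Multiset.card (Multiset.filter_add_not (· ∈ s) B)
    rw [Multiset.card_add, ← Multiset.countP_eq_card_filter] at hsplit
    rw [← Multiset.countP_eq_card_filter]
    omega
  · have hxs : x ∈ s := Multiset.of_mem_filter hx
    refine (hst hxs (hBt y hy)).resolve_left fun hred ↦ ?_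
    exact hAB x (Multiset.mem_of_mem_filter hx) y (Multiset.mem_of_mem_filter hy)
      ⟨hred, .inl ⟨hxs, hBt y hy⟩⟩

lemma exists_crossing_and_bicliques {s t : Finset V}
    (hst : (r ⊔ b).IsCompleteBetween (s : Set V) t) (hcard : s.card = t.card) :
    ∃ P S₁ S₂ T₁ T₂, IsCrossingSupport r s t P ∧ IsBalancedBiclique b s t S₁ S₂ ∧
      IsBalancedBiclique b s t T₁ T₂ ∧ P + ((S₁ + S₂) + (T₁ + T₂)) = s.val + t.val := by
  classical
  obtain ⟨P, A, B, hS, hAB⟩ := IsSearchState.exists_card_eq (r.between s t) (s.val + t.val)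
  have hmem : ∀ x ∈ P + (A + B), x ∈ (s : Set V) ∪ t := by
    rw [hS.sum_eq]
    simp
  have hsum : P.card + (A.card + B.card) = s.card + t.card := by
    simpa using congrArg Multiset.card hS.sum_eq
  have hcount : P.countP (· ∈ (s : Set V)) +
      (A.countP (· ∈ (s : Set V)) + B.countP (· ∈ (s : Set V))) = s.card := by
    have hs : s.val.countP (· ∈ (s : Set V)) = s.card := Multiset.countP_eq_card.2 fun _ h ↦ h
    have ht : t.val.countP (· ∈ (s : Set V)) = 0 := Multiset.countP_eq_zero.2 fun _ hxt hxs ↦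
      disjoint_left.1 hst.disjoint hxs hxt
    rw [← Multiset.countP_add, ← Multiset.countP_add, hS.sum_eq, Multiset.countP_add, hs, ht,
      add_zero]
  obtain ⟨hP, hPcount⟩ : IsCrossingSupport (r.between s t) s t P ∧
      2 * P.countP (· ∈ (s : Set V)) = P.card := by
    rcases hS.stack with rfl | ⟨u, v, hP⟩
    · exact ⟨.inl rfl, rfl⟩
    · exact hP.isCrossingSupport_of_even_card (between_isBipartiteWith hst.disjoint)
        (fun x hx ↦ hmem x (Multiset.mem_add.2 (.inl hx))) (by grind)
  refine ⟨P, A.filter (· ∈ (s : Set V)), B.filter (· ∉ (s : Set V)), B.filter (· ∈ (s : Set V)),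
    A.filter (· ∉ (s : Set V)), hP.mono between_le,
    isBalancedBiclique_filter hst (fun y hy ↦ hmem y (by simp [hy])) hS.not_adj (by omega),
    isBalancedBiclique_filter hst (fun y hy ↦ hmem y (by simp [hy]))
      (fun x hx y hy hxy ↦ hS.not_adj y hy x hx hxy.symm) (by omega), ?_⟩
  calc _ = P + ((A.filter (· ∈ (s : Set V)) + A.filter (· ∉ (s : Set V))) +
        (B.filter (· ∈ (s : Set V)) + B.filter (· ∉ (s : Set V)))) := by abel
    _ = s.val + t.val := by rw [Multiset.filter_add_not, Multiset.filter_add_not, hS.sum_eq]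

lemma isRedBlueSupport_of_isCompleteBetween {s t : Finset V}
    (hst : (r ⊔ b).IsCompleteBetween (s : Set V) t) (hcard : s.card = t.card)
    (hz : ∀ y ∈ s.val + t.val, (r ⊔ b).Adj z y) :
    IsRedBlueSupport r b ({z} + (s.val + t.val)) := by
  obtain ⟨P, S₁, S₂, T₁, T₂, hP, hS, hT, hsum⟩ := exists_crossing_and_bicliques hst hcard
  rw [← hsum] at hz ⊢
  rcases hS.isCrossingSupport_or_isSplitPair hst hT with hN | ⟨h, hS₁, hT₁⟩
  · exact hP.isRedBlueSupport_singleton_add hst hN hz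
  · exact h.isRedBlueSupport hS₁ hT₁ hst hP hz

lemma IsRedBlueSupport.exists_paths {G : SimpleGraph V} {c : Sym2 V → Bool} {U : Multiset V}
    (h : IsRedBlueSupport (monoSubgraph G c true) (monoSubgraph G c false) U)
    (hnodup : U.Nodup) (hU : ∀ y, y ∈ U) :
    ∃ (x u v : V) (R : G.Walk u x) (B : G.Walk v x),
      R.IsPath ∧ (∀ e ∈ R.edges, c e = true) ∧
      B.IsPath ∧ (∀ e ∈ B.edges, c e = false) ∧
      {y | y ∈ R.support} ∩ {y | y ∈ B.support} = {x} ∧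
      {y | y ∈ R.support} ∪ {y | y ∈ B.support} = Set.univ := by
  obtain ⟨x, u, v, M, N, hM, hN, hMN⟩ := h
  obtain ⟨M', rfl⟩ := hM.exists_eq_singleton_add
  obtain ⟨N', rfl⟩ := hN.exists_eq_singleton_add
  obtain rfl : {x} + M' + N' = U := by rwa [add_left_comm, add_right_inj] at hMN
  obtain ⟨hM_nodup, -, hdisj⟩ := Multiset.nodup_add.1 hnodup
  have hN_nodup : ({x} + N').Nodup :=
    (Multiset.nodup_add.1 (add_right_comm {x} M' N' ▸ hnodup)).1
  obtain ⟨R, hR, hR_red, hRM⟩ := hM.exists_monochromatic_path hM_nodup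
  obtain ⟨B, hB, hB_blue, hBN⟩ := hN.exists_monochromatic_path hN_nodup
  have mem_R (y : V) : y ∈ R.support ↔ y = x ∨ y ∈ M' := by
    rw [← Multiset.mem_coe, hRM, Multiset.mem_add, Multiset.mem_singleton]
  have mem_B (y : V) : y ∈ B.support ↔ y = x ∨ y ∈ N' := by
    rw [← Multiset.mem_coe, hBN, Multiset.mem_add, Multiset.mem_singleton]
  refine ⟨x, u, v, R, B, hR, hR_red, hB, hB_blue, ?_, ?_⟩
  · ext y
    have hy : y ∈ M' → y ∉ N' := fun hyM ↦
      Multiset.disjoint_left.1 hdisj (Multiset.mem_add.2 (.inr hyM))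
    simp only [mem_inter_iff, mem_ofPred_eq, mem_singleton_iff, mem_R, mem_B]
    tauto
  · refine eq_univ_of_forall fun y ↦ ?_
    have hy := hU y
    simp only [Multiset.mem_add, Multiset.mem_singleton] at hy
    simp only [mem_union, mem_ofPred_eq, mem_R, mem_B]
    tauto

lemma nodup_singleton_add_of_isCompleteBetween {G : SimpleGraph V} {s t : Finset V}
    (hst : G.IsCompleteBetween (s : Set V) t) (hz : ∀ y ∈ s.val + t.val, G.Adj z y) :
    ({z} + (s.val + t.val)).Nodup := by
  have hdisj : Disjoint s t := mod_cast hst.disjoint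
  exact Multiset.nodup_cons.2 ⟨fun hmem ↦ G.irrefl (hz z hmem),
    Multiset.nodup_add.2 ⟨s.nodup, t.nodup, Finset.disjoint_val.2 hdisj⟩⟩

lemma monoSubgraph_sup_monoSubgraph (G : SimpleGraph V) (c : Sym2 V → Bool) :
    monoSubgraph G c true ⊔ monoSubgraph G c false = G := by
  ext x y
  have hne : G.Adj x y → x ≠ y := G.ne_of_adj
  cases hc : c s(x, y) <;> simp [monoSubgraph, hc] <;> tauto

end Partition

/-- Lemma 2.4: if in a red/blue-coloured complete tripartite graph with classes
`V₁, V₂, V₃` of sizes `n₁, n₂, n₃` one has `n₁ = n₂` and `n₃ = 1`, then the graph can be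
partitioned into a red path and a blue path sharing exactly one vertex, a common
endvertex. -/
theorem stmt8 {V : Type*} [Fintype V]
    (f : V → Fin 3) (hf : Function.Surjective f)
    (G : SimpleGraph V) (hG : ∀ x y, G.Adj x y ↔ f x ≠ f y)
    (c : Sym2 V → Bool)
    (h12 : ({w | f w = 0} : Set V).ncard = ({w | f w = 1} : Set V).ncard)
    (h3 : ({w | f w = 2} : Set V).ncard = 1) :
    ∃ (x u v : V) (R : G.Walk u x) (B : G.Walk v x),
      R.IsPath ∧ (∀ e ∈ R.edges, c e = true) ∧
      B.IsPath ∧ (∀ e ∈ B.edges, c e = false) ∧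
      {y | y ∈ R.support} ∩ {y | y ∈ B.support} = {x} ∧
      {y | y ∈ R.support} ∪ {y | y ∈ B.support} = Set.univ := by
  classical
  obtain ⟨z, hz⟩ := ncard_eq_one.1 h3
  have hfz (y : V) : f y = 2 ↔ y = z := Set.ext_iff.1 hz y
  let s : Finset V := {w | f w = 0}
  let t : Finset V := {w | f w = 1}
  have hs (y : V) : y ∈ s ↔ f y = 0 := Finset.mem_filter_univ y
  have ht (y : V) : y ∈ t ↔ f y = 1 := Finset.mem_filter_univ y
  have hst : G.IsCompleteBetween (s : Set V) t := fun x hx y hy ↦ by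
    rw [hG, (hs x).1 hx, (ht y).1 hy]
    decide
  have hzst : ∀ y ∈ s.val + t.val, G.Adj z y := fun y hy ↦ by
    rw [Multiset.mem_add, Finset.mem_val, Finset.mem_val, hs, ht] at hy
    rw [hG, (hfz z).2 rfl]
    grind
  have hcard : s.card = t.card := by
    simpa [s, t, ← ncard_coe_finset] using h12
  have hmem (y : V) : y ∈ {z} + (s.val + t.val) := by
    simp only [Multiset.mem_add, Multiset.mem_singleton, Finset.mem_val, hs, ht, ← hfz]
    grind
  have hnodup := nodup_singleton_add_of_isCompleteBetween hst hzst
  rw [← monoSubgraph_sup_monoSubgraph G c] at hst hzst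
  exact (isRedBlueSupport_of_isCompleteBetween hst hcard hzst).exists_paths hnodup hmem
end

section
/- Let G be a complete tripartite graph with partition classes V₁, V₂, V₃ of sizes n₁, n₂, n₃, and suppose nᵢ ≤ n₍₃₋ᵢ₎ + n₃ − 1 for some i ∈ {1,2}. Let P be any Hamilton path of G (a path visiting every vertex of G exactly once). Then either P contains an edge with one endpoint in V₍₃₋ᵢ₎ and the other in V₃, or nᵢ = n₍₃₋ᵢ₎ + n₃ − 1 and both endvertices of P lie in V₍₃₋ᵢ₎ ∪ V₃. -/
open SimpleGraph Set

/- Let `σ` be `-1` on an independent set `S` and `1` off it. If a Hamilton path has no edge inside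
`Sᶜ`, then it alternates between `S` and `Sᶜ`, so the values of `σ` at the ends of each of its edges
cancel. Adding up these edge sums counts every vertex twice except the endvertices `u`, `v`, which
are counted once, whence `2 (|Sᶜ| - |S|) = σ u + σ v`. If `|S| + 1 ≤ |Sᶜ|` this forces
`σ u = σ v = 1` and equality. The theorem is the case where `S` is a class of the partition. -/

section HamiltonPath

variable {V : Type*} {G : SimpleGraph V} {u v : V}

theorem two_nsmul_sum_map_support {A : Type*} [AddCommMonoid A] (σ : V → A) (P : G.Walk u v) :
    2 • (P.support.map σ).sum =
      σ u + σ v + (P.darts.map fun d => σ d.fst + σ d.snd).sum := by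
  induction P with
  | nil => simp [two_nsmul]
  | cons _ p ih =>
    simp only [Walk.support_cons, Walk.darts_cons, List.map_cons, List.sum_cons, smul_add, ih,
      two_nsmul]
    abel

theorem sum_map_support_of_isHamiltonian [Fintype V] [DecidableEq V] {A : Type*} [AddCommMonoid A]
    (σ : V → A) {P : G.Walk u v} (hP : P.IsHamiltonian) :
    (P.support.map σ).sum = ∑ x, σ x := by
  rw [← List.sum_toFinset σ hP.isPath.support_nodup, hP.toFinset_support]

theorem sum_ite_neg_one_one_eq_ncard_compl_sub_ncard [Fintype V] (S : Set V)
    [DecidablePred (· ∈ S)] :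
    ∑ x, (if x ∈ S then (-1 : ℤ) else 1) = Sᶜ.ncard - S.ncard := by
  simp only [Finset.sum_ite, Finset.sum_const, smul_neg, nsmul_one, Set.ncard_eq_toFinset_card',
    ← Set.filter_mem_univ_eq_toFinset, Set.mem_compl_iff]
  ring

theorem two_mul_ncard_compl_sub_ncard_of_alternating [DecidableEq V] {S : Set V}
    [DecidablePred (· ∈ S)] {P : G.Walk u v} (hP : P.IsHamiltonian)
    (halt : ∀ a b, s(a, b) ∈ P.edges → (a ∈ S ↔ b ∉ S)) :
    2 * ((Sᶜ.ncard : ℤ) - S.ncard) =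
      (if u ∈ S then -1 else 1) + (if v ∈ S then -1 else 1) := by
  have := hP.fintype
  let σ : V → ℤ := fun x => if x ∈ S then -1 else 1
  have hcancel : (P.darts.map fun d => σ d.fst + σ d.snd).sum = 0 := by
    refine List.sum_eq_zero fun z hz => ?_
    obtain ⟨d, hd, rfl⟩ := List.mem_map.1 hz
    have hmem := halt d.fst d.snd (List.mem_map_of_mem hd)
    by_cases hb : d.snd ∈ S <;> simp [σ, hmem, hb]
  calc 2 * ((Sᶜ.ncard : ℤ) - S.ncard)
      = 2 • (P.support.map σ).sum := by
        rw [sum_map_support_of_isHamiltonian σ hP,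
          sum_ite_neg_one_one_eq_ncard_compl_sub_ncard, two_nsmul, two_mul]
    _ = σ u + σ v := by rw [two_nsmul_sum_map_support, hcancel, add_zero]

theorem mem_iff_notMem_of_mem_edges {S : Set V} (hS : G.IsIndepSet S) {P : G.Walk u v}
    (hSc : ¬∃ a b, s(a, b) ∈ P.edges ∧ a ∉ S ∧ b ∉ S) {a b : V} (hab : s(a, b) ∈ P.edges) :
    a ∈ S ↔ b ∉ S := by
  have hadj : G.Adj a b := P.adj_of_mem_edges hab
  exact ⟨fun ha hb => hS ha hb hadj.ne hadj, fun hb => by_contra fun ha => hSc ⟨a, b, hab, ha, hb⟩⟩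

theorem exists_edge_notMem_or_ncard_add_one_eq [DecidableEq V] {S : Set V} (hS : G.IsIndepSet S)
    (hle : S.ncard + 1 ≤ Sᶜ.ncard) {P : G.Walk u v} (hP : P.IsHamiltonian) :
    (∃ a b, s(a, b) ∈ P.edges ∧ a ∉ S ∧ b ∉ S) ∨
      (S.ncard + 1 = Sᶜ.ncard ∧ u ∉ S ∧ v ∉ S) := by
  classical
  refine or_iff_not_imp_left.2 fun hSc => ?_
  have hcount := two_mul_ncard_compl_sub_ncard_of_alternating hP
    fun _ _ => mem_iff_notMem_of_mem_edges hS hSc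
  have hu : u ∉ S := fun hu => by
    rw [if_pos hu] at hcount
    split_ifs at hcount <;> omega
  have hv : v ∉ S := fun hv => by
    rw [if_neg hu, if_pos hv] at hcount
    omega
  rw [if_neg hu, if_neg hv] at hcount
  exact ⟨by omega, hu, hv⟩

theorem ne_iff_eq_or_eq_of_fin_three {i j k : Fin 3} (hij : i ≠ j) (hik : i ≠ k) (hjk : j ≠ k)
    (c : Fin 3) : c ≠ i ↔ c = j ∨ c = k := by
  decide +revert

theorem stmt9_general [DecidableEq V] (C : G.Coloring (Fin 3)) {i j k : Fin 3}
    (hij : i ≠ j) (hik : i ≠ k) (hjk : j ≠ k)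
    (hle : (C.colorClass i).ncard + 1 ≤ (C.colorClass j).ncard + (C.colorClass k).ncard)
    {P : G.Walk u v} (hP : P.IsHamiltonian) :
    (∃ a b, s(a, b) ∈ P.edges ∧ C a = j ∧ C b = k) ∨
      ((C.colorClass i).ncard + 1 = (C.colorClass j).ncard + (C.colorClass k).ncard ∧
        (C u = j ∨ C u = k) ∧ (C v = j ∨ C v = k)) := by
  have := hP.finite
  have hcolor (x : V) : x ∉ C.colorClass i ↔ C x = j ∨ C x = k :=
    ne_iff_eq_or_eq_of_fin_three hij hik hjk (C x)
  have hcompl : (C.colorClass i)ᶜ = C.colorClass j ∪ C.colorClass k := Set.ext hcolor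
  have hdisj : Disjoint (C.colorClass j) (C.colorClass k) :=
    Set.disjoint_left.2 fun _ hj hk => hjk (hj.symm.trans hk)
  rw [← Set.ncard_union_eq hdisj, ← hcompl] at hle ⊢
  refine (exists_edge_notMem_or_ncard_add_one_eq (C.isIndepSet_colorClass i) hle hP).imp ?_ ?_
  · rintro ⟨a, b, hab, ha, hb⟩
    have hne : C a ≠ C b := C.valid (P.adj_of_mem_edges hab)
    rcases (hcolor a).1 ha with haj | hak
    · exact ⟨a, b, hab, haj, ((hcolor b).1 hb).resolve_left fun hbj => hne (haj.trans hbj.symm)⟩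
    · exact ⟨b, a, Sym2.eq_swap ▸ hab,
        ((hcolor b).1 hb).resolve_right fun hbk => hne (hak.trans hbk.symm), hak⟩
  · simp only [hcolor, imp_self]

end HamiltonPath

/-- Lemma 2.5: let `G` be a complete tripartite graph with classes `V₁, V₂, V₃` (fibres of
`f` over `0, 1, 2`) of sizes `n₁, n₂, n₃`, and suppose `nᵢ ≤ n₍₃₋ᵢ₎ + n₃ − 1` for some
`i ∈ {1,2}` (here `i, i'` with `{i, i'} = {0, 1}`). Then any Hamilton path `P` of `G`
either contains an edge between `V₍₃₋ᵢ₎` and `V₃`, or `nᵢ = n₍₃₋ᵢ₎ + n₃ − 1` and both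
endvertices of `P` lie in `V₍₃₋ᵢ₎ ∪ V₃`. -/
theorem stmt9 {V : Type*} [Fintype V]
    (f : V → Fin 3) (hf : Function.Surjective f)
    (G : SimpleGraph V) (hG : ∀ x y, G.Adj x y ↔ f x ≠ f y)
    (i i' : Fin 3) (hii' : (i = 0 ∧ i' = 1) ∨ (i = 1 ∧ i' = 0))
    (hle : ({w | f w = i} : Set V).ncard + 1 ≤
      ({w | f w = i'} : Set V).ncard + ({w | f w = 2} : Set V).ncard)
    (u v : V) (P : G.Walk u v) (hP : P.IsPath) (hham : ∀ x : V, x ∈ P.support) :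
    (∃ a b : V, s(a, b) ∈ P.edges ∧ f a = i' ∧ f b = 2) ∨
    (({w | f w = i} : Set V).ncard + 1 =
        ({w | f w = i'} : Set V).ncard + ({w | f w = 2} : Set V).ncard ∧
      (f u = i' ∨ f u = 2) ∧ (f v = i' ∨ f v = 2)) := by
  classical
  rcases hii' with ⟨rfl, rfl⟩ | ⟨rfl, rfl⟩ <;>
    exact stmt9_general (Coloring.mk f fun h => (hG _ _).1 h) (by decide) (by decide) (by decide)
      hle (hP.isHamiltonian_of_mem hham)
end

section
/- Let δ > 0 and let G be a complete multipartite graph on n vertices which has at least three partition classes each of size greater than 2√δ·n. Then no red/blue colouring of the edges of G is δ-close to a split colouring. -/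
open SimpleGraph Set

/-!
Already bipartiteness is out of reach. In a proper `q`-colouring of what remains of `G` after the
deletion, each of more than `q` pairwise completely joined sets with more than `q * t` vertices has
more than `t` vertices of one colour, and two of these sets share that colour. The more than `t ^ 2`
edges of `G` between the two monochromatic pieces must all have been deleted. For `t = √δ * n` this
exceeds `δ * |E(G)|`, as `|E(G)| ≤ n ^ 2`.
-/

lemma injOn_sym2_mk_prod_of_disjoint {α : Type*} {s t : Set α} (h : Disjoint s t) :
    InjOn (fun p : α × α ↦ s(p.1, p.2)) (s ×ˢ t) := by
  rintro ⟨x, y⟩ ⟨hx, -⟩ ⟨x', y'⟩ ⟨-, hy'⟩ hxy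
  obtain ⟨hxx', hyy'⟩ | ⟨hxy', -⟩ := Sym2.eq_iff.mp hxy
  · exact Prod.ext hxx' hyy'
  · exact absurd hxy' (h.ne_of_mem hx hy')

lemma exists_lt_ncard_inter_preimage {α κ R : Type*} [Fintype κ] [Field R] [LinearOrder R]
    [IsStrictOrderedRing R] (C : α → κ) {s : Set α} (hs : s.Finite) {t : R}
    (hst : Fintype.card κ * t < s.ncard) : ∃ a, t < (s ∩ C ⁻¹' {a}).ncard := by
  classical
  lift s to Finset α using hs
  rw [ncard_coe_finset, ← nsmul_eq_mul] at hst
  obtain ⟨a, -, ha⟩ :=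
    Finset.exists_lt_card_fiber_of_nsmul_lt_card_of_maps_to (fun x _ ↦ Finset.mem_univ (C x)) hst
  refine ⟨a, ha.trans_eq ?_⟩
  rw [← ncard_coe_finset, Finset.coe_filter]
  rfl

lemma ncard_edgeSet_le_card_sq {V : Type*} [Fintype V] (G : SimpleGraph V) :
    G.edgeSet.ncard ≤ Fintype.card V ^ 2 := by
  classical
  rw [← coe_edgeFinset, ncard_coe_finset]
  exact card_edgeFinset_le_card_choose_two.trans (Nat.choose_le_pow _ _)

section DeleteEdges

variable {V : Type*} {G : SimpleGraph V} {F : Set (Sym2 V)}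

lemma ncard_mul_ncard_le_of_deleteEdges {s t : Set V} (hst : G.IsCompleteBetween s t)
    (hF : F.Finite) (hFst : ∀ x ∈ s, ∀ y ∈ t, ¬ (G.deleteEdges F).Adj x y) :
    s.ncard * t.ncard ≤ F.ncard := by
  rw [← ncard_prod]
  refine ncard_le_ncard_of_injOn _ ?_ (injOn_sym2_mk_prod_of_disjoint hst.disjoint) hF
  rintro ⟨x, y⟩ ⟨hx, hy⟩
  by_contra hxy
  exact hFst x hx y hy (deleteEdges_adj.mpr ⟨hst hx hy, hxy⟩)

variable {ι : Type*} {I : Set ι} {S : ι → Set V} {q : ℕ}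

lemma sq_lt_ncard_of_colorable_deleteEdges
    (hS : I.Pairwise fun a b ↦ G.IsCompleteBetween (S a) (S b)) (hI : q < I.ncard)
    {t : ℝ} (ht : 0 ≤ t) (hSt : ∀ a ∈ I, q * t < (S a).ncard) (hF : F.Finite)
    (hC : (G.deleteEdges F).Colorable q) :
    t ^ 2 < F.ncard := by
  obtain ⟨C⟩ := hC
  have exists_large_piece (a : ι) (ha : a ∈ I) : ∃ r, t < (S a ∩ C.colorClass r).ncard := by
    have hpos : (0 : ℝ) < (S a).ncard := (by positivity : 0 ≤ q * t).trans_lt (hSt a ha)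
    refine exists_lt_ncard_inter_preimage C (finite_of_ncard_pos (mod_cast hpos)) ?_
    rw [Fintype.card_fin]
    exact hSt a ha
  obtain ⟨a₀, ha₀⟩ : I.Nonempty := nonempty_of_ncard_ne_zero (by lia)
  have : Nonempty (Fin q) := (exists_large_piece a₀ ha₀).nonempty
  choose! r hr using exists_large_piece
  obtain ⟨a, ha, b, hb, hab, hrab⟩ :=
    exists_ne_map_eq_of_ncard_lt_of_maps_to (t := univ) (by simpa) (fun a _ ↦ mem_univ (r a))
  have hle : (S a ∩ C.colorClass (r a)).ncard * (S b ∩ C.colorClass (r b)).ncard ≤ F.ncard :=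
    ncard_mul_ncard_le_of_deleteEdges (fun _ hx _ hy ↦ hS ha hb hab hx.1 hy.1) hF
      fun _ hx _ hy ↦ C.not_adj_of_mem_colorClass hx.2 (hrab ▸ hy.2)
  calc t ^ 2 = t * t := sq t
    _ < (S a ∩ C.colorClass (r a)).ncard * (S b ∩ C.colorClass (r b)).ncard :=
      mul_lt_mul'' (hr a ha) (hr b hb) ht ht
    _ ≤ F.ncard := mod_cast hle

theorem stmt13_general [Fintype V] (hS : I.Pairwise fun a b ↦ G.IsCompleteBetween (S a) (S b))
    (hI : q < I.ncard) {δ : ℝ} (hδ : 0 ≤ δ)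
    (hbig : ∀ a ∈ I, q * √δ * Fintype.card V < (S a).ncard)
    (hF : F.ncard ≤ δ * G.edgeSet.ncard) : ¬ (G.deleteEdges F).Colorable q := by
  intro hC
  have hlt : (√δ * Fintype.card V) ^ 2 < F.ncard :=
    sq_lt_ncard_of_colorable_deleteEdges hS hI (by positivity)
      (fun a ha ↦ (mul_assoc _ _ _).symm.trans_lt (hbig a ha)) F.toFinite hC
  have hle : (F.ncard : ℝ) ≤ (√δ * Fintype.card V) ^ 2 :=
    calc (F.ncard : ℝ) ≤ δ * G.edgeSet.ncard := hF
      _ ≤ δ * Fintype.card V ^ 2 := by gcongr; exact_mod_cast ncard_edgeSet_le_card_sq G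
      _ = (√δ * Fintype.card V) ^ 2 := by rw [mul_pow, Real.sq_sqrt hδ]
  exact hlt.not_ge hle

end DeleteEdges

lemma CloseToSplit.exists_isBipartite_deleteEdges {V : Type*} {G : SimpleGraph V}
    {c : Sym2 V → Bool} {δ : ℝ} (h : CloseToSplit G c δ) :
    ∃ F : Set (Sym2 V), F.ncard ≤ δ * G.edgeSet.ncard ∧ (G.deleteEdges F).IsBipartite := by
  obtain ⟨F, -, hF, U, W, -, hUW, hadj, -⟩ := h
  exact ⟨F, hF, IsBipartiteWith.isBipartite ⟨hUW, hadj⟩⟩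

lemma isCompleteBetween_fibers {V κ : Type*} {G : SimpleGraph V} {f : V → κ}
    (hG : ∀ x y, f x ≠ f y → G.Adj x y) {a b : κ} (hab : a ≠ b) :
    G.IsCompleteBetween {v | f v = a} {v | f v = b} := by
  rintro x rfl y rfl
  exact hG x y hab

/-- No red/blue colouring of a complete multipartite graph on `n` vertices having at least
three partition classes each of size greater than `2√δ·n` is `δ`-close to a split
colouring. -/
theorem stmt13 {V : Type*} [Fintype V] (δ : ℝ) (hδ : 0 < δ)
    (k : ℕ) (f : V → Fin k) (hf : Function.Surjective f)
    (G : SimpleGraph V) (hG : ∀ x y, G.Adj x y ↔ f x ≠ f y)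
    (i j l : Fin k) (hij : i ≠ j) (hil : i ≠ l) (hjl : j ≠ l)
    (hbig : ∀ m ∈ ({i, j, l} : Set (Fin k)),
      2 * Real.sqrt δ * (Fintype.card V : ℝ) < (({v | f v = m} : Set V).ncard : ℝ))
    (c : Sym2 V → Bool) :
    ¬ CloseToSplit G c δ := by
  intro hclose
  obtain ⟨F, hF, hbip⟩ := hclose.exists_isBipartite_deleteEdges
  have hcard : ({i, j, l} : Set (Fin k)).ncard = 3 :=
    ncard_eq_three.mpr ⟨i, j, l, hij, hil, hjl, rfl⟩
  exact stmt13_general (fun _ _ _ _ ↦ isCompleteBetween_fibers fun x y ↦ (hG x y).mpr)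
    (hcard ▸ Nat.lt_succ_self 2) hδ.le hbig hF hbip
end
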